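/- arXiv:math/9905104 — 2 statements merged into one kernel-verified Lean document; each statement's English description precedes it below -/
import Mathlib

section
/- For every integer d ≥ 1, the genus 2 Hurwitz numbers satisfy the recursion H_{2,d} = d² · ((97/136)d − 20/17) · H_{1,d} + ∑_{i=1}^{d−1} binom(2d, 2i−2) · (8d − (115/17)i) · i · (d−i) · H_{0,i} · H_{2,d−i} + ∑_{i=1}^{d−1} binom(2d, 2i) · ((11697/34) · i(d−i) − (3899/68) · d²) · i · (d−i) · H_{1,i} · H_{1,d−i} in ℚ. (This recursion was conjectured by Graber and the second author and established by Goulden and Jackson.) -/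
/-- The number of `r`-tuples `(τ₁, …, τ_r)` of transpositions in the symmetric group on
`d` letters whose product `τ₁ ⬝ τ₂ ⋯ τ_r` is the identity and which generate a subgroup
acting transitively on the `d` letters. -/
noncomputable def hurwitzTupleCount (d r : ℕ) : ℕ :=
  Nat.card {τ : Fin r → Equiv.Perm (Fin d) //
    (∀ i, (τ i).IsSwap) ∧ (List.ofFn τ).prod = 1 ∧
    ∀ x y : Fin d, ∃ σ ∈ Subgroup.closure (Set.range τ), σ x = y}

/-- The Hurwitz number `H_{g,d}`: `1/d!` times the number of `(2g - 2 + 2d)`-tuples of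
transpositions in `S_d` with product the identity, generating a transitive subgroup. -/
noncomputable def hurwitzNumber (g d : ℕ) : ℚ :=
  (hurwitzTupleCount d (2 * g + 2 * d - 2) : ℚ) / (Nat.factorial d : ℚ)


namespace HurwitzToda

open Finset MvPolynomial

/-- product rule for finite products -/
theorem deriv_prod {A ι : Type*} [CommRing A] [DecidableEq ι] (D : A → A)
    (hmul : ∀ x y, D (x * y) = D x * y + x * D y) (h1 : D 1 = 0) (s : Finset ι) (f : ι → A) :
    D (∏ i ∈ s, f i) = ∑ i ∈ s, (∏ j ∈ s.erase i, f j) * D (f i) := by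
  induction s using Finset.induction_on with
  | empty => simp [h1]
  | insert a s ha ih =>
    rw [prod_insert ha, hmul, ih, sum_insert ha, erase_insert ha, mul_comm (D (f a)), mul_sum]
    congr 1
    apply sum_congr rfl
    intro i hi
    have hia : i ≠ a := fun h => ha (h ▸ hi)
    rw [erase_insert_of_ne (Ne.symm hia), prod_insert (by simp [ha])]
    ring

/-- Euler operator -/
noncomputable def eul {N : ℕ} (i : Fin N) (f : MvPolynomial (Fin N) ℚ) : MvPolynomial (Fin N) ℚ :=
  X i * pderiv i f

theorem eul_mul {N : ℕ} (i : Fin N) (f g : MvPolynomial (Fin N) ℚ) :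
    eul i (f * g) = eul i f * g + f * eul i g := by
  simp only [eul, Derivation.leibniz, smul_eq_mul]; ring

theorem eul_add {N : ℕ} (i : Fin N) (f g : MvPolynomial (Fin N) ℚ) :
    eul i (f + g) = eul i f + eul i g := by
  simp only [eul, map_add]; ring

theorem eul_sum {N : ℕ} {ι : Type*} (i : Fin N) (s : Finset ι) (f : ι → MvPolynomial (Fin N) ℚ) :
    eul i (∑ k ∈ s, f k) = ∑ k ∈ s, eul i (f k) := by
  simp only [eul, map_sum, mul_sum]

theorem eul_smul {N : ℕ} (i : Fin N) (c : ℚ) (f : MvPolynomial (Fin N) ℚ) :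
    eul i (c • f) = c • eul i f := by
  rw [eul, Derivation.map_smul, mul_smul_comm, eul]

theorem eul_monomial {N : ℕ} (i : Fin N) (m : Fin N →₀ ℕ) (c : ℚ) :
    eul i (monomial m c) = (m i : ℚ) • monomial m c := by
  rw [eul, X_mul_pderiv_monomial]
  simp only [← Nat.cast_smul_eq_nsmul ℚ]

theorem coeff_eul {N : ℕ} (i : Fin N) (m : Fin N →₀ ℕ) (f : MvPolynomial (Fin N) ℚ) :
    coeff m (eul i f) = m i * coeff m f := by
  induction f using MvPolynomial.induction_on' with
  | monomial u c =>
    rw [eul_monomial, coeff_smul, coeff_monomial]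
    split_ifs with h
    · subst h; simp
    · simp
  | add p q hp hq => rw [eul_add, coeff_add, coeff_add, hp, hq]; ring

/-- the Vandermonde polynomial -/
noncomputable def vdm (N : ℕ) : MvPolynomial (Fin N) ℚ :=
  (Matrix.vandermonde (fun i : Fin N => (X i : MvPolynomial (Fin N) ℚ))).det

/-- staircase exponent permuted -/
noncomputable def stair {N : ℕ} (κ : Equiv.Perm (Fin N)) : Fin N →₀ ℕ :=
  Finsupp.equivFunOnFinite.symm (fun i => ((κ i : Fin N) : ℕ))

@[simp] theorem stair_apply {N : ℕ} (κ : Equiv.Perm (Fin N)) (i : Fin N) :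
    stair κ i = ((κ i : Fin N) : ℕ) := rfl

theorem monomial_eq_prod {N : ℕ} (m : Fin N →₀ ℕ) :
    (monomial m (1 : ℚ)) = ∏ i, (X i : MvPolynomial (Fin N) ℚ) ^ (m i) := by
  rw [monomial_eq, Finsupp.prod_fintype _ _ (by simp)]; simp

theorem vdm_eq_sum (N : ℕ) :
    vdm N = ∑ κ : Equiv.Perm (Fin N), ((Equiv.Perm.sign κ : ℤ) : ℚ) • monomial (stair κ) (1 : ℚ) := by
  rw [vdm, ← Matrix.det_transpose, Matrix.det_apply']
  apply Finset.sum_congr rfl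
  intro κ _
  rw [monomial_eq_prod, smul_eq_C_mul]
  simp [Matrix.vandermonde_apply]

theorem sum_eul_eul_vdm (N : ℕ) :
    ∑ i, eul i (eul i (vdm N)) = (∑ k ∈ range N, (k : ℚ) ^ 2) • vdm N := by
  simp only [vdm_eq_sum, eul_sum, smul_sum, eul_smul, eul_monomial]
  rw [sum_comm]
  apply sum_congr rfl
  intro κ _
  simp only [smul_smul, ← sum_smul]
  congr 1
  rw [mul_comm (∑ k ∈ range N, (k : ℚ) ^ 2), ← Fin.sum_univ_eq_sum_range (fun k => (k : ℚ) ^ 2),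
    ← Equiv.sum_comp κ (fun k : Fin N => ((k : ℕ) : ℚ) ^ 2), mul_sum]
  apply sum_congr rfl
  intro i _
  rw [stair_apply]; ring

theorem exists_B (N : ℕ) : ∃ B : Fin N → Fin N → MvPolynomial (Fin N) ℚ,
    (∀ i j, i ≠ j → (X i - X j) * B i j = vdm N) ∧ (∀ i j, B j i = - B i j) ∧
    ∀ i, pderiv i (vdm N) = ∑ j ∈ univ.erase i, B i j := by
  classical
  set S : Finset (Fin N × Fin N) := univ.filter (fun e => e.1 < e.2) with hS
  set f : Fin N × Fin N → MvPolynomial (Fin N) ℚ := fun e => X e.2 - X e.1 with hf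
  have hv : vdm N = ∏ e ∈ S, f e := by
    rw [vdm, Matrix.det_vandermonde, hS, prod_filter, ← univ_product_univ, prod_product]
    apply prod_congr rfl
    intro i _
    rw [← prod_filter]
    apply prod_congr _ (fun _ _ => rfl)
    ext j; simp
  set Q : Fin N × Fin N → MvPolynomial (Fin N) ℚ := fun e => ∏ e' ∈ S.erase e, f e' with hQ
  have hfQ : ∀ e ∈ S, f e * Q e = vdm N := by
    intro e he; rw [hv, hQ]; exact mul_prod_erase S f he
  refine ⟨fun i j => if i < j then - Q (i, j) else if j < i then Q (j, i) else 0, ?_, ?_, ?_⟩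
  · intro i j hij
    rcases lt_or_gt_of_ne hij with h | h
    · have := hfQ (i, j) (by simp [hS, h])
      simp only [h, if_true, ← this, hf]; ring
    · have := hfQ (j, i) (by simp [hS, h])
      simp only [h, not_lt_of_gt h, if_true, if_false, ← this, hf]
  · intro i j
    rcases lt_trichotomy i j with h | h | h
    · simp [h, not_lt_of_gt h]
    · simp [h]
    · simp [h, not_lt_of_gt h]
  · intro i
    have h1 := deriv_prod (fun g : MvPolynomial (Fin N) ℚ => pderiv i g)
      (fun x y => by simp only [Derivation.leibniz, smul_eq_mul]; ring) (by simp) S f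
    rw [hv]
    refine h1.trans ?_
    have h2 : ∀ e, pderiv i (f e) = (if e.2 = i then 1 else 0) - (if e.1 = i then 1 else 0) := by
      intro e
      simp only [hf, map_sub, pderiv_X, Pi.single_apply, eq_comm]
    have h3 : ∑ e ∈ S, Q e * (if e.2 = i then 1 else 0) = ∑ x, if x < i then Q (x, i) else 0 := by
      rw [hS, sum_filter, ← univ_product_univ, sum_product]
      apply sum_congr rfl
      intro x _
      rw [sum_eq_single i (by intro y _ hy; simp [hy]) (by simp)]
      simp
    have h4 : ∑ e ∈ S, Q e * (if e.1 = i then 1 else 0) = ∑ x, if i < x then Q (i, x) else 0 := by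
      rw [hS, sum_filter, ← univ_product_univ, sum_product_right]
      apply sum_congr rfl
      intro x _
      rw [sum_eq_single i (by intro y _ hy; simp [hy]) (by simp)]
      simp
    have h5 : ∑ e ∈ S, (∏ j ∈ S.erase e, f j) * pderiv i (f e) =
        ∑ e ∈ S, Q e * (if e.2 = i then 1 else 0) - ∑ e ∈ S, Q e * (if e.1 = i then 1 else 0) := by
      rw [← sum_sub_distrib]
      apply sum_congr rfl
      intro e _
      rw [h2, mul_sub]
    rw [h5, h3, h4, ← sum_sub_distrib, ← add_sum_erase _ _ (mem_univ i)]
    simp only [lt_irrefl, if_false, sub_zero, zero_add]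
    apply sum_congr rfl
    intro x hx
    rcases lt_or_gt_of_ne (ne_of_mem_erase hx) with h | h
    · simp [h, not_lt_of_gt h]
    · simp [h, not_lt_of_gt h]

/-- words invariant under a permutation -/
noncomputable def powP {α : Type*} [Fintype α] [DecidableEq α] (N : ℕ) (σ : Equiv.Perm α) :
    MvPolynomial (Fin N) ℚ :=
  ∑ w : α → Fin N with (∀ u, w (σ u) = w u), ∏ s, X (w s)

theorem eul_word {α : Type*} [Fintype α] [DecidableEq α] {N : ℕ} (w : α → Fin N) (i : Fin N) :
    eul i (∏ s, X (w s)) = (∑ s, if w s = i then (1 : ℚ) else 0) • ∏ s, X (w s) := by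
  have h1 : eul i (1 : MvPolynomial (Fin N) ℚ) = 0 := by simp [eul]
  rw [deriv_prod (eul i) (eul_mul i) h1, sum_smul]
  apply sum_congr rfl
  intro s _
  have : eul i (X (w s) : MvPolynomial (Fin N) ℚ) = if w s = i then X (w s) else 0 := by
    by_cases h : w s = i
    · rw [if_pos h, h]; simp [eul]
    · rw [if_neg h]; simp [eul, pderiv_X, h]
  rw [this]
  split_ifs
  · rw [mul_comm, mul_prod_erase _ (fun s => (X (w s) : MvPolynomial (Fin N) ℚ)) (mem_univ s), one_smul]
  · simp

theorem sum_eul_eul_powP {α : Type*} [Fintype α] [DecidableEq α] (N : ℕ) (σ : Equiv.Perm α) :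
    ∑ i, eul i (eul i (powP N σ)) =
      ∑ s : α, ∑ t : α, ∑ w : α → Fin N with (∀ u, w (σ u) = w u),
        if w s = w t then ∏ s, X (w s) else 0 := by
  simp only [powP, eul_sum, eul_word, eul_smul, smul_smul]
  rw [sum_comm]
  conv_rhs =>
    enter [2, s]
    rw [sum_comm]
  rw [sum_comm (s := (univ : Finset α))]
  apply sum_congr rfl
  intro w _
  rw [← sum_smul]
  have : ∀ s t : α, (if w s = w t then (∏ s, X (w s) : MvPolynomial (Fin N) ℚ) else 0) =
      (if w s = w t then (1 : ℚ) else 0) • ∏ s, X (w s) := by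
    intro s t; split_ifs <;> simp
  simp only [this, ← sum_smul]
  congr 1
  simp only [sum_mul_sum]
  rw [sum_comm]
  apply sum_congr rfl
  intro s _
  rw [sum_comm]
  apply sum_congr rfl
  intro t _
  rw [sum_eq_single (w s)]
  · simp [eq_comm]
  · intro b _ hb; simp [Ne.symm hb]
  · simp

theorem sum_eul_powP {α : Type*} [Fintype α] [DecidableEq α] (N : ℕ) (σ : Equiv.Perm α) :
    ∑ i, eul i (powP N σ) = (Fintype.card α : ℚ) • powP N σ := by
  simp only [powP, eul_sum, eul_word, smul_sum]
  rw [sum_comm]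
  apply sum_congr rfl
  intro w _
  rw [← sum_smul, sum_comm]
  simp

/-- the two-jump words with given jump positions -/
noncomputable def jumpT {α : Type*} [Fintype α] [DecidableEq α] {N : ℕ} (σ : Equiv.Perm α)
    (i j : Fin N) (s t : α) : MvPolynomial (Fin N) ℚ :=
  ∑ w : α → Fin N with ((∀ u, w ((σ * Equiv.swap s t) u) = w u) ∧
     w s = i ∧ w t = j), ∏ s, X (w s)

/-- the two-jump words -/
noncomputable def jumpA {α : Type*} [Fintype α] [DecidableEq α] {N : ℕ} (σ : Equiv.Perm α)
    (i j : Fin N) : MvPolynomial (Fin N) ℚ :=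
  ∑ s : α, ∑ t : α, jumpT σ i j s t

theorem eul_powP {α : Type*} [Fintype α] [DecidableEq α] {N : ℕ} (σ : Equiv.Perm α) (i : Fin N) :
    eul i (powP N σ) = ∑ s : α, ∑ w : α → Fin N with ((∀ u, w (σ u) = w u) ∧ w s = i),
      ∏ s, X (w s) := by
  simp only [powP, eul_sum, eul_word]
  have : ∀ s : α, (∑ w : α → Fin N with ((∀ u, w (σ u) = w u) ∧ w s = i),
      ∏ s, (X (w s) : MvPolynomial (Fin N) ℚ)) = ∑ w : α → Fin N with (∀ u, w (σ u) = w u),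
        (if w s = i then (1:ℚ) else 0) • ∏ s, X (w s) := by
    intro s
    rw [← filter_filter, sum_filter]
    apply sum_congr rfl
    intro w _
    split_ifs <;> simp
  simp only [this]
  rw [sum_comm]
  simp only [sum_smul]

theorem jump_aux {α : Type*} [Fintype α] [DecidableEq α] {N : ℕ} (σ : Equiv.Perm α)
    (i j k : Fin N) (hij : i ≠ j) (C : α → α → (α → Fin N) → Prop)
    [∀ s t w, Decidable (C s t w)]
    (h1 : ∀ s w, C s s w ↔ w s = k) (h2 : ∀ s t w, s ≠ t → (C s t w ↔ w s = i ∧ w t = j)) :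
    jumpA σ i j + eul k (powP N σ) =
      ∑ x : α × α × (α → Fin N) with ((∀ u, x.2.2 ((σ * Equiv.swap x.1 x.2.1) u) = x.2.2 u) ∧
        C x.1 x.2.1 x.2.2), ∏ s, X (x.2.2 s) := by
  simp only [jumpA, jumpT]
  rw [sum_filter, ← univ_product_univ, sum_product, eul_powP, ← sum_add_distrib]
  apply sum_congr rfl
  intro s _
  rw [← univ_product_univ, sum_product, ← add_sum_erase univ _ (mem_univ s),
    ← add_sum_erase univ (fun x => ∑ y : α → Fin N, _) (mem_univ s)]
  simp only [← sum_filter]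
  have e1 : (univ.filter fun w : α → Fin N => (∀ u, w ((σ * Equiv.swap s s) u) = w u) ∧
     w s = i ∧ w s = j) = ∅ := by
    ext w
    simp only [mem_filter, mem_univ, true_and, notMem_empty, iff_false]
    rintro ⟨-, h, h'⟩
    exact hij (h ▸ h')
  rw [e1, sum_empty, zero_add, add_comm]
  congr 1
  · apply sum_congr _ (fun _ _ => rfl)
    ext w
    simp [h1]
  · apply sum_congr rfl
    intro t ht
    apply sum_congr _ (fun _ _ => rfl)
    ext w
    simp only [mem_filter, mem_univ, true_and]
    rw [h2 s t w (ne_of_mem_erase ht).symm]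

theorem X_mul_update {α : Type*} [Fintype α] [DecidableEq α] {N : ℕ} (w : α → Fin N) (p : α)
    (i : Fin N) :
    X i * ∏ s, (X (w s) : MvPolynomial (Fin N) ℚ) =
      X (w p) * ∏ s, X (Function.update w p i s) := by
  rw [← mul_prod_erase univ (fun s => (X (w s) : MvPolynomial (Fin N) ℚ)) (mem_univ p),
    ← mul_prod_erase univ (fun s => (X (Function.update w p i s) : MvPolynomial (Fin N) ℚ))
      (mem_univ p)]
  have : ∏ s ∈ univ.erase p, (X (Function.update w p i s) : MvPolynomial (Fin N) ℚ) =
      ∏ s ∈ univ.erase p, X (w s) := by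
    apply prod_congr rfl
    intro s hs
    rw [Function.update_of_ne (ne_of_mem_erase hs)]
  rw [this, Function.update_self]
  ring

theorem inv_swap_iff {α : Type*} [DecidableEq α] {N : ℕ} (σ : Equiv.Perm α) (s t : α)
    (w : α → Fin N) : (∀ u, w ((σ * Equiv.swap s t) u) = w u) ↔
      (w (σ s) = w t ∧ w (σ t) = w s ∧ ∀ u, u ≠ s → u ≠ t → w (σ u) = w u) := by
  constructor
  · intro h
    refine ⟨by simpa using h t, by simpa using h s, fun u h1 h2 => ?_⟩
    have := h u
    rwa [Equiv.Perm.mul_apply, Equiv.swap_apply_of_ne_of_ne h1 h2] at this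
  · rintro ⟨h1, h2, h3⟩ u
    rw [Equiv.Perm.mul_apply]
    by_cases hs : u = s
    · subst hs; simpa using h2
    · by_cases ht : u = t
      · subst ht; simpa using h1
      · rw [Equiv.swap_apply_of_ne_of_ne hs ht]; exact h3 u hs ht

theorem jump_rel {α : Type*} [Fintype α] [DecidableEq α] {N : ℕ} (σ : Equiv.Perm α)
    (i j : Fin N) (hij : i ≠ j) :
    X i * (jumpA σ i j + eul j (powP N σ)) = X j * (jumpA σ i j + eul i (powP N σ)) := by
  classical
  rw [jump_aux σ i j j hij (fun s t w => w t = j ∧ (s = t ∨ w s = i)) (by intros; simp)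
      (by intro s t w h; simp [h, and_comm]),
    jump_aux σ i j i hij (fun s t w => w s = i ∧ (s = t ∨ w t = j)) (by intros; simp)
      (by intro s t w h; simp [h]), mul_sum, mul_sum]
  refine sum_bij' (fun x _ => (σ x.1, x.2.1, Function.update x.2.2 (σ x.1) i))
    (fun x _ => (σ⁻¹ x.1, x.2.1, Function.update x.2.2 x.1 j)) ?_ ?_ ?_ ?_ ?_
  · rintro ⟨s, t, w⟩ h
    simp only [mem_filter, mem_univ, true_and, inv_swap_iff] at h ⊢
    obtain ⟨⟨h1, h2, h3⟩, h4, h5⟩ := h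
    have hinj : ∀ a b, σ a = σ b → a = b := fun a b h => σ.injective h
    simp only [Function.update_apply]
    grind
  · rintro ⟨s, t, w⟩ h
    simp only [mem_filter, mem_univ, true_and, inv_swap_iff] at h ⊢
    obtain ⟨⟨h1, h2, h3⟩, h4, h5⟩ := h
    have hinj : ∀ a b, σ a = σ b → a = b := fun a b h => σ.injective h
    obtain ⟨s, rfl⟩ := σ.surjective s
    have hs : σ⁻¹ (σ s) = s := by simp
    simp only [Function.update_apply, hs]
    grind
  · rintro ⟨s, t, w⟩ h
    simp only [mem_filter, mem_univ, true_and, inv_swap_iff] at h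
    obtain ⟨⟨h1, h2, h3⟩, h4, h5⟩ := h
    simp [← h4, ← h1]
  · rintro ⟨s, t, w⟩ h
    simp only [mem_filter, mem_univ, true_and, inv_swap_iff] at h
    obtain ⟨⟨h1, h2, h3⟩, h4, h5⟩ := h
    simp [← h4]
  · rintro ⟨s, t, w⟩ h
    simp only [mem_filter, mem_univ, true_and, inv_swap_iff] at h
    obtain ⟨⟨h1, h2, h3⟩, h4, h5⟩ := h
    rw [X_mul_update w (σ s) i]
    simp only [h1, h4]

theorem four_sum_comm {α β M : Type*} [Fintype α] [Fintype β] [DecidableEq β] [AddCommMonoid M]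
    (g : β → β → α → α → M) :
    ∑ i : β, ∑ j ∈ univ.erase i, ∑ s : α, ∑ t : α, g i j s t =
    ∑ s : α, ∑ t : α, ∑ i : β, ∑ j ∈ univ.erase i, g i j s t := by
  have h : ∀ i : β, ∑ j ∈ univ.erase i, ∑ s : α, ∑ t : α, g i j s t =
      ∑ s : α, ∑ t : α, ∑ j ∈ univ.erase i, g i j s t := by
    intro i
    rw [sum_comm]
    apply sum_congr rfl
    intro s _
    rw [sum_comm]
  simp only [h]
  rw [sum_comm]
  apply sum_congr rfl
  intro s _
  rw [sum_comm]

theorem cut_sum {α : Type*} [Fintype α] [DecidableEq α] {N : ℕ} (σ : Equiv.Perm α) :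
    ∑ s : α, ∑ t ∈ univ.erase s, powP N (σ * Equiv.swap s t) =
    ∑ i, eul i (eul i (powP N σ)) - (Fintype.card α : ℚ) • powP N σ +
      ∑ i, ∑ j ∈ univ.erase i, jumpA σ i j := by
  have h1 : ∀ s t : α, powP N (σ * Equiv.swap s t) =
      (∑ w : α → Fin N with (∀ u, w (σ u) = w u), if w s = w t then ∏ s, X (w s) else 0) +
      ∑ i, ∑ j ∈ univ.erase i, jumpT σ i j s t := by
    intro s t
    simp only [jumpT]
    rw [powP, ← sum_filter_add_sum_filter_not _ (fun w => w s = w t)]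
    congr 1
    · rw [← sum_filter]
      apply sum_congr _ (fun _ _ => rfl)
      ext w
      simp only [mem_filter, mem_univ, true_and, inv_swap_iff]
      constructor
      · rintro ⟨⟨h1, h2, h3⟩, h4⟩
        refine ⟨fun u => ?_, h4⟩
        by_cases hs : u = s
        · rw [hs, h1, h4]
        · by_cases ht : u = t
          · rw [ht, h2, h4]
          · exact h3 u hs ht
      · rintro ⟨h, h4⟩
        exact ⟨⟨by rw [h, h4], by rw [h, h4], fun u _ _ => h u⟩, h4⟩
    · rw [sum_sigma']
      rw [← sum_fiberwise_of_maps_to (t := univ.sigma fun i : Fin N => univ.erase i)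
        (g := fun w : α → Fin N => (⟨w s, w t⟩ : Σ _ : Fin N, Fin N))]
      · apply sum_congr rfl
        rintro ⟨i, j⟩ hij
        have hij' : j ≠ i := by simpa using hij
        apply sum_congr _ (fun _ _ => rfl)
        ext w
        simp only [mem_filter, mem_univ, true_and, Sigma.mk.injEq, heq_eq_eq]
        constructor
        · rintro ⟨⟨h, -⟩, h1, h2⟩; exact ⟨h, h1, h2⟩
        · rintro ⟨h, h1, h2⟩; exact ⟨⟨h, by rw [h1, h2]; exact hij'.symm⟩, h1, h2⟩
      · intro w hw
        simp only [mem_filter, mem_univ, true_and] at hw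
        simp [Ne.symm hw.2]
  have h2 : ∑ s : α, powP N (σ * Equiv.swap s s) = (Fintype.card α : ℚ) • powP N σ := by
    have : ∀ s : α, σ * Equiv.swap s s = σ := by
      intro s; rw [Equiv.swap_self]; rfl
    simp only [this]
    simp [Nat.cast_smul_eq_nsmul]
  have h3 : ∑ s : α, ∑ t ∈ univ.erase s, powP N (σ * Equiv.swap s t) =
      ∑ s : α, ∑ t : α, powP N (σ * Equiv.swap s t) - (Fintype.card α : ℚ) • powP N σ := by
    rw [← h2, ← sum_sub_distrib]
    apply sum_congr rfl
    intro s _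
    rw [← add_sum_erase univ _ (mem_univ s)]; ring
  have h4 : ∑ i : Fin N, ∑ j ∈ univ.erase i, jumpA σ i j = ∑ s : α, ∑ t : α,
      ∑ i : Fin N, ∑ j ∈ univ.erase i, jumpT σ i j s t := by
    simp only [jumpA]
    exact four_sum_comm (fun i j s t => jumpT σ i j s t)
  rw [h3, h4, sum_eul_eul_powP]
  simp only [h1, sum_add_distrib]
  ring

theorem cut_join {α : Type*} [Fintype α] [DecidableEq α] (N : ℕ) (σ : Equiv.Perm α) :
    (∑ s : α, ∑ t ∈ univ.erase s, powP N (σ * Equiv.swap s t)) * vdm N =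
    ∑ i, eul i (eul i (powP N σ * vdm N)) -
      ((∑ k ∈ range N, (k : ℚ) ^ 2) + (2 * N - 1) * (Fintype.card α)) • (powP N σ * vdm N) := by
  obtain ⟨B, hB1, hB2, hB3⟩ := exists_B N
  have h1 : ∀ i j : Fin N, i ≠ j → jumpA σ i j * vdm N =
      X j * eul i (powP N σ) * B i j - X i * eul j (powP N σ) * B i j := by
    intro i j hij
    have := jump_rel σ i j hij
    rw [← hB1 i j hij]
    linear_combination (B i j) * this
  have h2 : (∑ i : Fin N, ∑ j ∈ univ.erase i, jumpA σ i j) * vdm N =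
      2 * ∑ i : Fin N, ∑ j ∈ univ.erase i, X j * eul i (powP N σ) * B i j := by
    have : (∑ i : Fin N, ∑ j ∈ univ.erase i, jumpA σ i j) * vdm N =
       ∑ i : Fin N, ∑ j ∈ univ.erase i, X j * eul i (powP N σ) * B i j -
       ∑ i : Fin N, ∑ j ∈ univ.erase i, X i * eul j (powP N σ) * B i j := by
      rw [sum_mul, ← sum_sub_distrib]
      apply sum_congr rfl
      intro i _
      rw [sum_mul, ← sum_sub_distrib]
      apply sum_congr rfl
      intro j hj
      exact h1 i j (ne_of_mem_erase hj).symm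
    rw [this]
    have h3 : ∑ i : Fin N, ∑ j ∈ univ.erase i, X i * eul j (powP N σ) * B i j =
        ∑ i : Fin N, ∑ j ∈ univ.erase i, - (X j * eul i (powP N σ) * B i j) := by
      rw [sum_comm' (t' := univ) (s' := fun i => univ.erase i) (by intro x y; simp [eq_comm])]
      apply sum_congr rfl
      intro i _
      apply sum_congr rfl
      intro j _
      rw [hB2 i j]; ring
    rw [h3]
    simp only [sum_neg_distrib]
    ring
  have h4 : ∀ i : Fin N, ∑ j ∈ univ.erase i, X j * eul i (powP N σ) * B i j =
      eul i (powP N σ) * eul i (vdm N) - ((N : ℚ) - 1) • (eul i (powP N σ) * vdm N) := by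
    intro i
    have : ∀ j ∈ univ.erase i, X j * eul i (powP N σ) * B i j =
        eul i (powP N σ) * X i * B i j - eul i (powP N σ) * vdm N := by
      intro j hj
      rw [← hB1 i j (ne_of_mem_erase hj).symm]; ring
    rw [sum_congr rfl this, sum_sub_distrib, ← mul_sum, ← hB3, sum_const, card_erase_of_mem (mem_univ i),
      card_univ, Fintype.card_fin, eul.eq_1 i (vdm N), mul_assoc]
    congr 1
    rw [← Nat.cast_smul_eq_nsmul ℚ, Nat.cast_sub (by have := i.2; omega)]
    simp
  have h5 : ∀ i : Fin N, eul i (eul i (powP N σ * vdm N)) = eul i (eul i (powP N σ)) * vdm N +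
      2 * (eul i (powP N σ) * eul i (vdm N)) + powP N σ * eul i (eul i (vdm N)) := by
    intro i
    simp only [eul_mul, eul_add]; ring
  rw [cut_sum, add_mul, h2]
  simp only [h4, h5, sum_sub_distrib, sum_add_distrib, ← smul_sum, ← mul_sum, ← sum_mul]
  rw [sum_eul_powP, sum_eul_eul_vdm]
  simp only [smul_eq_C_mul, map_add, map_sub, map_mul, map_one, map_natCast, map_ofNat]
  ring

end HurwitzToda

namespace HurwitzToda
open Finset MvPolynomial

/-- Coefficient function of a polynomial. -/
noncomputable def fn {N : ℕ} (h : MvPolynomial (Fin N) ℚ) (m : Fin N → ℕ) : ℚ :=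
  coeff (Finsupp.equivFunOnFinite.symm m) h

/-- Multiplication by the power sum on coefficient functions. -/
def opP {N : ℕ} (k : ℕ) (f : (Fin N → ℕ) → ℚ) (m : Fin N → ℕ) : ℚ :=
  ∑ i, if k ≤ m i then f (Function.update m i (m i - k)) else 0

/-- The lowering operator. -/
def opS {N : ℕ} (f : (Fin N → ℕ) → ℚ) (m : Fin N → ℕ) : ℚ :=
  ∑ i, f (Function.update m i (m i + 1))

def Anti {N : ℕ} (f : (Fin N → ℕ) → ℚ) : Prop :=
  ∀ i j, i ≠ j → ∀ m, f (m ∘ Equiv.swap i j) = - f m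

def DegLe {N : ℕ} (e : ℤ) (f : (Fin N → ℕ) → ℚ) : Prop :=
  ∀ m, f m ≠ 0 → ((∑ i, m i : ℕ) : ℤ) ≤ ((∑ i ∈ range N, i : ℕ) : ℤ) + e

theorem sum_range_card_le (s : Finset ℕ) : ∑ i ∈ range s.card, i ≤ ∑ x ∈ s, x := by
  induction h : s.card generalizing s with
  | zero => simp
  | succ n ih =>
    have hne : s.Nonempty := by rw [← card_pos]; omega
    have hm := s.max'_mem hne
    have hc : (s.erase (s.max' hne)).card = n := by rw [card_erase_of_mem hm]; omega
    have h1 := ih _ hc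
    rw [sum_range_succ, ← add_sum_erase _ _ hm]
    have : n ≤ s.max' hne := by
      have hsub : s.erase (s.max' hne) ⊆ range (s.max' hne) := by
        intro x hx
        rw [mem_range]
        exact lt_of_le_of_ne (s.le_max' x (mem_of_mem_erase hx)) (ne_of_mem_erase hx)
      have := card_le_card hsub
      rw [card_range] at this; omega
    omega

theorem Anti.inj {N : ℕ} {f : (Fin N → ℕ) → ℚ} (hf : Anti f) {m : Fin N → ℕ} (hm : f m ≠ 0) :
    Function.Injective m := by
  intro i j hij
  by_contra hne
  have h := hf i j hne m
  have : m ∘ Equiv.swap i j = m := by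
    funext x
    simp only [Function.comp, Equiv.swap_apply_def]
    split_ifs <;> simp_all
  rw [this] at h
  apply hm; linarith

theorem inj_sum {N : ℕ} {m : Fin N → ℕ} (hm : Function.Injective m) :
    ∑ i ∈ range N, i ≤ ∑ i, m i := by
  have := sum_range_card_le (univ.image m)
  rwa [card_image_of_injective _ hm, sum_image (fun _ _ _ _ h => hm h), card_univ,
    Fintype.card_fin] at this

theorem inj_missing {N : ℕ} {m : Fin N → ℕ} (hm : Function.Injective m) (j : ℕ)
    (hj : ∀ i, m i ≠ j) :
    (∑ i ∈ range N, i) + N ≤ (∑ i, m i) + j := by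
  have hj' : j ∉ univ.image m := by simp [hj]
  have := sum_range_card_le (insert j (univ.image m))
  rw [card_insert_of_notMem hj', sum_insert hj', card_image_of_injective _ hm,
    sum_image (fun _ _ _ _ h => hm h), card_univ, Fintype.card_fin, sum_range_succ] at this
  omega

theorem Anti.eq_zero {N : ℕ} {f : (Fin N → ℕ) → ℚ} (hf : Anti f) {e : ℤ} (he : DegLe e f)
    (h : e < 0) : f = 0 := by
  funext m
  by_contra hm
  have := he m hm
  have := inj_sum (hf.inj hm)
  omega

theorem update_comp_swap {N : ℕ} (m : Fin N → ℕ) (i j x : Fin N) (c : ℕ) :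
    Function.update (m ∘ Equiv.swap i j) x c = Function.update m (Equiv.swap i j x) c ∘ Equiv.swap i j := by
  funext y
  simp only [Function.comp, Function.update_apply]
  simp

theorem Anti.opS {N : ℕ} {f : (Fin N → ℕ) → ℚ} (hf : Anti f) : Anti (opS f) := by
  intro i j hij m
  simp only [HurwitzToda.opS, update_comp_swap, hf i j hij, ← sum_neg_distrib]
  exact Equiv.sum_comp (Equiv.swap i j) (fun x => - f (Function.update m x (m x + 1)))

theorem DegLe.opS {N : ℕ} {f : (Fin N → ℕ) → ℚ} {e : ℤ} (hf : DegLe e f) : DegLe (e-1) (opS f) := by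
  intro m hm
  obtain ⟨i, -, hi⟩ := exists_ne_zero_of_sum_ne_zero hm
  have := hf _ hi
  rw [sum_update_of_mem (mem_univ i)] at this
  rw [← add_sum_erase _ _ (mem_univ i)]
  simp only [sdiff_singleton_eq_erase] at this
  push_cast at *
  linarith

theorem opS_opP {N : ℕ} (k : ℕ) (hk : 1 ≤ k) (f : (Fin N → ℕ) → ℚ) (m : Fin N → ℕ) :
    opS (opP k f) m = opP k (opS f) m +
      ∑ i, if m i = k - 1 then f (Function.update m i 0) else 0 := by
  simp only [opS, opP]
  rw [sum_comm]
  rw [← sum_add_distrib]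
  refine sum_congr rfl fun i _ => ?_
  rw [← add_sum_erase _ _ (mem_univ i)]
  have : ∑ x ∈ univ.erase i, (if k ≤ Function.update m x (m x + 1) i then
      f (Function.update (Function.update m x (m x + 1)) i (Function.update m x (m x + 1) i - k)) else 0)
      = if k ≤ m i then ∑ x ∈ univ.erase i, f (Function.update (Function.update m i (m i - k)) x
        (Function.update m i (m i - k) x + 1)) else 0 := by
    split_ifs with h
    · refine sum_congr rfl fun x hx => ?_
      have hx' := ne_of_mem_erase hx
      rw [Function.update_of_ne hx'.symm, if_pos h, Function.update_comm hx', Function.update_of_ne hx']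
    · refine sum_eq_zero fun x hx => ?_
      have hx' := ne_of_mem_erase hx
      rw [Function.update_of_ne hx'.symm, if_neg h]
  rw [this, ← add_sum_erase univ (fun x => f (Function.update (Function.update m i (m i - k)) x
        (Function.update m i (m i - k) x + 1))) (mem_univ i)]
  simp only [Function.update_self, Function.update_idem]
  by_cases h : k ≤ m i
  · rw [if_pos h, if_pos h, if_pos (by omega), if_neg (by omega)]
    rw [show m i + 1 - k = m i - k + 1 by omega]; ring
  · rw [if_neg h, if_neg h]
    by_cases h2 : m i = k - 1
    · rw [if_pos h2, if_pos (by omega), show m i + 1 - k = 0 by omega]; ring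
    · rw [if_neg h2, if_neg (by omega)]

theorem opS_opP_one {N : ℕ} {f : (Fin N → ℕ) → ℚ} (hf : Anti f) {e : ℤ} (he : DegLe e f)
    (h : e + 1 ≤ N) : opS (opP 1 f) = opP 1 (opS f) + f := by
  funext m
  rw [opS_opP _ le_rfl, Pi.add_apply]
  congr 1
  by_cases hm : f m = 0
  · rw [hm]
    refine sum_eq_zero fun i _ => ?_
    split_ifs with h1
    · rw [← hm]; congr 1; rw [Function.update_eq_self_iff]; simpa using h1.symm
    · rfl
  · have hinj := hf.inj hm
    have : ∃ i, m i = 0 := by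
      by_contra hc
      push Not at hc
      have h1 := inj_missing hinj 0 hc
      have h2 := he m hm
      omega
    obtain ⟨i, hi⟩ := this
    rw [sum_eq_single i]
    · rw [if_pos (by simpa using hi)]
      congr 1; rw [Function.update_eq_self_iff]; exact hi.symm
    · intro b _ hb
      rw [if_neg]
      intro h1
      exact hb (hinj (by rw [hi, h1]))
    · simp

theorem opS_opP_ge_two {N : ℕ} {f : (Fin N → ℕ) → ℚ} (hf : Anti f) {e : ℤ} (he : DegLe e f)
    {k : ℕ} (hk : 2 ≤ k) (h : e + k ≤ N) : opS (opP k f) = opP k (opS f) := by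
  funext m
  rw [opS_opP _ (by omega), add_eq_left]
  set Q : (Fin N → ℕ) → ℚ := fun m => ∑ i, if m i = k - 1 then f (Function.update m i 0) else 0
    with hQ
  have hanti : Anti Q := by
    intro i j hij m
    simp only [hQ, update_comp_swap, hf i j hij, ← sum_neg_distrib]
    rw [← Equiv.sum_comp (Equiv.swap i j)]
    simp [neg_ite, apply_ite]
  by_contra hne
  obtain ⟨i, -, hi⟩ := exists_ne_zero_of_sum_ne_zero hne
  split_ifs at hi with h1
  · have hinj := hf.inj hi
    have : ∃ j, Function.update m i 0 j = k - 1 := by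
      by_contra hc
      push Not at hc
      have h1 := inj_missing hinj _ hc
      have h2 := he _ hi
      omega
    obtain ⟨j, hj⟩ := this
    have hji : j ≠ i := by
      rintro rfl
      simp at hj; omega
    rw [Function.update_of_ne hji] at hj
    exact hji (hanti.inj (m := m) hne (by rw [hj, h1]))
  · exact hi rfl

theorem iter_opS_opP {N : ℕ} {k : ℕ} (hk : 2 ≤ k) (n : ℕ) :
    ∀ {f : (Fin N → ℕ) → ℚ} (_ : Anti f) {e : ℤ} (_ : DegLe e f)
    (_ : e + k ≤ N), opS^[n] (opP k f) = opP k (opS^[n] f) ∧ Anti (opS^[n] f) ∧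
      DegLe (e - n) (opS^[n] f) := by
  induction n with
  | zero => intro f hf e he h; simp [hf, he]
  | succ n ih =>
    intro f hf e he h
    rw [Function.iterate_succ_apply, Function.iterate_succ_apply, opS_opP_ge_two hf he hk h]
    have := ih hf.opS he.opS (by omega)
    refine ⟨this.1, this.2.1, ?_⟩
    convert this.2.2 using 1
    push_cast; ring

theorem iter_opS_opP_zero {N : ℕ} {k : ℕ} (hk : 2 ≤ k) {e : ℕ} {f : (Fin N → ℕ) → ℚ} (hf : Anti f)
    (he : DegLe (e : ℤ) f) (h : e + k ≤ N) (n : ℕ) (hn : e < n) : opS^[n] (opP k f) = 0 := by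
  obtain ⟨h1, h2, h3⟩ := iter_opS_opP hk n hf he (by exact_mod_cast h)
  rw [h1, h2.eq_zero h3 (by omega)]
  funext m
  simp [opP]

theorem opS_smul {N : ℕ} (c : ℚ) (f : (Fin N → ℕ) → ℚ) : opS (c • f) = c • opS f := by
  funext m; simp [opS, mul_sum]

theorem opP_smul {N : ℕ} (k : ℕ) (c : ℚ) (f : (Fin N → ℕ) → ℚ) : opP k (c • f) = c • opP k f := by
  funext m; simp [opP, mul_sum]

theorem fn_pow_mul {N : ℕ} (k : ℕ) (h : MvPolynomial (Fin N) ℚ) :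
    fn ((∑ i, X i ^ k) * h) = opP k (fn h) := by
  funext m
  simp only [fn, opP, sum_mul, coeff_sum]
  refine sum_congr rfl fun i _ => ?_
  rw [X_pow_eq_monomial, coeff_monomial_mul']
  have h1 : Finsupp.single i k ≤ Finsupp.equivFunOnFinite.symm m ↔ k ≤ m i := by
    rw [Finsupp.single_le_iff]; simp
  by_cases h2 : k ≤ m i
  · rw [if_pos (h1.2 h2), if_pos h2, one_mul]
    congr 1
    ext j
    by_cases hj : j = i
    · subst hj; simp
    · simp [hj, Finsupp.single_apply, Ne.symm hj]
  · rw [if_neg (fun h => h2 (h1.1 h)), if_neg h2]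

end HurwitzToda

namespace HurwitzToda
open Finset MvPolynomial

theorem rename_vdm {N : ℕ} {i j : Fin N} (hij : i ≠ j) :
    rename (Equiv.swap i j) (vdm N) = - vdm N := by
  have h := Matrix.det_permute (Equiv.swap i j)
    (Matrix.vandermonde (fun i : Fin N => (X i : MvPolynomial (Fin N) ℚ)))
  rw [Equiv.Perm.sign_swap hij] at h
  rw [vdm, AlgHom.map_det]
  have h2 : (rename (Equiv.swap i j)).mapMatrix
      (Matrix.vandermonde (fun i : Fin N => (X i : MvPolynomial (Fin N) ℚ))) =
      (Matrix.vandermonde (fun i : Fin N => (X i : MvPolynomial (Fin N) ℚ))).submatrix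
        (Equiv.swap i j) id := by
    ext a b
    simp [Matrix.vandermonde_apply]
  rw [h2, h]; simp

theorem rename_powP {α : Type*} [Fintype α] [DecidableEq α] {N : ℕ} (σ : Equiv.Perm α)
    (κ : Equiv.Perm (Fin N)) : rename κ (powP N σ) = powP N σ := by
  simp only [powP, map_sum, map_prod, rename_X]
  refine sum_nbij' (fun w => κ ∘ w) (fun w => κ.symm ∘ w) ?_ ?_ ?_ ?_ ?_
  · intro w; simp
  · intro w; simp
  · intro w _; funext x; simp
  · intro w _; funext x; simp
  · intro w _; simp

theorem anti_of_rename {N : ℕ} (h : MvPolynomial (Fin N) ℚ)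
    (hh : ∀ i j, i ≠ j → rename (Equiv.swap i j) h = -h) : Anti (fn h) := by
  intro i j hij m
  have h1 := coeff_rename_mapDomain (Equiv.swap i j) (Equiv.injective _) h
    (Finsupp.equivFunOnFinite.symm m)
  rw [hh i j hij, coeff_neg] at h1
  simp only [fn]
  rw [← h1, neg_neg]
  congr 1
  ext x
  have : x = Equiv.swap i j (Equiv.swap i j x) := by simp
  conv_rhs => rw [this]
  rw [Finsupp.mapDomain_apply (Equiv.injective _)]
  simp

theorem anti_powP_vdm {α : Type*} [Fintype α] [DecidableEq α] {N : ℕ} (σ : Equiv.Perm α) :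
    Anti (fn (powP N σ * vdm N)) := by
  apply anti_of_rename
  intro i j hij
  rw [map_mul, rename_powP, rename_vdm hij, mul_neg]

theorem isHomogeneous_powP {α : Type*} [Fintype α] [DecidableEq α] (N : ℕ) (σ : Equiv.Perm α) :
    (powP N σ).IsHomogeneous (Fintype.card α) := by
  apply IsHomogeneous.sum
  intro w _
  have := IsHomogeneous.prod (univ : Finset α) (fun s => (X (w s) : MvPolynomial (Fin N) ℚ)) (fun _ => 1)
    (fun s _ => isHomogeneous_X _ _)
  simpa using this

theorem isHomogeneous_vdm (N : ℕ) : (vdm N).IsHomogeneous (∑ i ∈ range N, i) := by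
  rw [vdm_eq_sum]
  apply IsHomogeneous.sum
  intro κ _
  rw [smul_monomial]
  apply isHomogeneous_monomial
  rw [Finsupp.degree_eq_sum]
  simp only [stair_apply]
  rw [Equiv.sum_comp κ (fun x => (x : ℕ)), Fin.sum_univ_eq_sum_range (fun x => x)]

theorem degLe_of_homogeneous {N e : ℕ} (h : MvPolynomial (Fin N) ℚ)
    (hh : h.IsHomogeneous (e + ∑ i ∈ range N, i)) : DegLe (e : ℤ) (fn h) := by
  intro m hm
  have := hh hm
  have h3 := DFunLike.congr_fun (Finsupp.degree_eq_weight_one (σ := Fin N) (R := ℕ)) (Finsupp.equivFunOnFinite.symm m)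
  have h4 : (Finsupp.weight (1 : Fin N → ℕ)) (Finsupp.equivFunOnFinite.symm m) = _ := h3.symm
  rw [h4] at this
  rw [Finsupp.degree_eq_sum] at this
  simp at this
  rw [this]; push_cast; linarith

theorem degLe_powP_vdm {α : Type*} [Fintype α] [DecidableEq α] {N : ℕ} (σ : Equiv.Perm α) :
    DegLe (Fintype.card α : ℤ) (fn (powP N σ * vdm N)) :=
  degLe_of_homogeneous _ ((isHomogeneous_powP N σ).mul (isHomogeneous_vdm N))

theorem powP_one {α : Type*} [Fintype α] [DecidableEq α] (N : ℕ) :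
    powP N (1 : Equiv.Perm α) = (∑ i, X i ^ 1) ^ (Fintype.card α) := by
  simp only [powP, pow_one]
  rw [← card_univ, ← prod_const, prod_univ_sum]
  simp

theorem inv_sameCycle {α β : Type*} {σ : Equiv.Perm α} {w : α → β} (hw : ∀ u, w (σ u) = w u) {x y : α}
    (h : σ.SameCycle x y) : w x = w y := by
  have h1 : ∀ (n : ℕ) z, w ((σ ^ n) z) = w z := by
    intro n
    induction n with
    | zero => simp
    | succ n ih => intro z; rw [pow_succ, Equiv.Perm.mul_apply, ih, hw]
  obtain ⟨k, rfl⟩ := h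
  obtain ⟨n, rfl | rfl⟩ := k.eq_nat_or_neg
  · simp [h1]
  · have := h1 n ((σ ^ (-(n:ℤ))) x)
    rw [← this]; simp

theorem powP_factor {α : Type} [Fintype α] [DecidableEq α] (N : ℕ) {σ : Equiv.Perm α} (hσ : σ ≠ 1) :
    ∃ (β : Type) (_ : Fintype β) (_ : DecidableEq β) (k : ℕ) (σ' : Equiv.Perm β), 2 ≤ k ∧
      Fintype.card β + k = Fintype.card α ∧
      powP N σ = (∑ i, X i ^ k) * powP N σ' := by
  classical
  obtain ⟨x, hx⟩ : ∃ x, σ x ≠ x := by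
    by_contra hc
    push Not at hc
    exact hσ (Equiv.ext hc)
  have hsc : ∀ y, (¬ σ.SameCycle x (σ y)) ↔ ¬ σ.SameCycle x y := by
    intro y; rw [Equiv.Perm.sameCycle_apply_right]
  refine ⟨{y // ¬ σ.SameCycle x y}, inferInstance, inferInstance,
    Fintype.card {y // σ.SameCycle x y}, σ.subtypePerm hsc, ?_, ?_, ?_⟩
  · apply Fintype.one_lt_card_iff.2
    refine ⟨⟨x, Equiv.Perm.SameCycle.refl _ _⟩, ⟨σ x, ?_⟩, ?_⟩
    · rw [Equiv.Perm.sameCycle_apply_right]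
    · intro h
      exact hx (congrArg Subtype.val h).symm
  · rw [Fintype.card_subtype_compl]
    have := Fintype.card_subtype_le (fun y => σ.SameCycle x y)
    omega
  · rw [powP, powP, sum_mul_sum, ← sum_product']
    refine sum_bij' (fun w _ => (w x, fun y => w y.1))
      (fun p _ => fun y => if h : σ.SameCycle x y then p.1 else p.2 ⟨y, h⟩) ?_ ?_ ?_ ?_ ?_
    · intro w hw
      simp only [mem_filter, mem_univ, true_and, mem_product] at hw ⊢
      intro u
      simp [hw]
    · rintro ⟨i, w'⟩ hw
      simp only [mem_filter, mem_univ, true_and, mem_product] at hw ⊢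
      intro u
      by_cases h : σ.SameCycle x u
      · rw [dif_pos h, dif_pos (Equiv.Perm.sameCycle_apply_right.2 h)]
      · rw [dif_neg h, dif_neg (by rwa [Equiv.Perm.sameCycle_apply_right])]
        exact hw ⟨u, h⟩
    · intro w hw
      simp only [mem_filter, mem_univ, true_and] at hw
      funext y
      by_cases h : σ.SameCycle x y
      · simp [h, inv_sameCycle hw h]
      · simp [h]
    · rintro ⟨i, w'⟩ hw
      simp only [Prod.mk.injEq]
      refine ⟨dif_pos (Equiv.Perm.SameCycle.refl _ _), ?_⟩
      funext y
      simp [y.2]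
    · intro w hw
      simp only [mem_filter, mem_univ, true_and] at hw
      rw [← Fintype.prod_subtype_mul_prod_subtype (fun y => σ.SameCycle x y)]
      congr 1
      rw [← card_univ, ← prod_const]
      refine prod_congr rfl fun y _ => ?_
      rw [inv_sameCycle hw y.2]

theorem iter_zero {N : ℕ} (n : ℕ) : opS^[n] (0 : (Fin N → ℕ) → ℚ) = 0 := by
  induction n with
  | zero => rfl
  | succ n ih => rw [Function.iterate_succ_apply', ih]; funext m; simp [opS]

theorem iter_smul {N : ℕ} (n : ℕ) (c : ℚ) (f : (Fin N → ℕ) → ℚ) :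
    opS^[n] (c • f) = c • opS^[n] f := by
  induction n with
  | zero => rfl
  | succ n ih => rw [Function.iterate_succ_apply', ih, opS_smul, Function.iterate_succ_apply']

theorem extract {α : Type} [Fintype α] [DecidableEq α] {N : ℕ} (hN : Fintype.card α ≤ N)
    (σ : Equiv.Perm α) :
    opS^[Fintype.card α] (fn (powP N σ * vdm N)) =
      if σ = 1 then ((Fintype.card α).factorial : ℚ) • fn (vdm N) else 0 := by
  split_ifs with h
  · subst h
    rw [powP_one]
    generalize Fintype.card α = n at *
    have key : ∀ n : ℕ, Anti (fn ((∑ i, (X i : MvPolynomial (Fin N) ℚ) ^ 1) ^ n * vdm N)) ∧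
        DegLe (n : ℤ) (fn ((∑ i, (X i : MvPolynomial (Fin N) ℚ) ^ 1) ^ n * vdm N)) := by
      intro n
      have h1 := anti_powP_vdm (N := N) (1 : Equiv.Perm (Fin n))
      have h2 := degLe_powP_vdm (N := N) (1 : Equiv.Perm (Fin n))
      rw [powP_one, Fintype.card_fin] at h1 h2
      exact ⟨h1, h2⟩
    have h0 : opS (fn (vdm N)) = 0 := by
      have h1 := key 0
      rw [pow_zero, one_mul] at h1
      exact h1.1.opS.eq_zero h1.2.opS (by norm_num)
    have step : ∀ n, n + 1 ≤ N → opS (fn ((∑ i, (X i : MvPolynomial (Fin N) ℚ) ^ 1) ^ (n+1) * vdm N)) =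
        ((n : ℚ) + 1) • (fn ((∑ i, (X i : MvPolynomial (Fin N) ℚ) ^ 1) ^ n * vdm N)) := by
      intro n
      induction n with
      | zero =>
        intro hn
        have h1 := key 0
        rw [zero_add, pow_one, fn_pow_mul]
        rw [pow_zero, one_mul] at h1 ⊢
        rw [opS_opP_one h1.1 h1.2 (by exact_mod_cast hn), h0]
        funext m; simp [opP]
      | succ n ih =>
        intro hn
        have h1 := key (n+1)
        rw [pow_succ', mul_assoc, fn_pow_mul, opS_opP_one h1.1 h1.2 (by exact_mod_cast hn),
          ih (by omega), opP_smul, ← fn_pow_mul, ← mul_assoc, ← pow_succ']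
        push_cast
        rw [add_smul ((n:ℚ)+1) 1, one_smul]
    clear key h0
    induction n with
    | zero => simp
    | succ n ih =>
      rw [Function.iterate_succ_apply, step n hN, iter_smul, ih (by omega), smul_smul,
        Nat.factorial_succ]
      push_cast; rfl
  · obtain ⟨β, _, _, k, σ', hk, hc, hp⟩ := powP_factor N h
    rw [hp, mul_assoc, fn_pow_mul]
    exact iter_opS_opP_zero hk (anti_powP_vdm σ') (degLe_powP_vdm σ') (by omega) _ (by omega)

end HurwitzToda

namespace HurwitzToda
open Finset MvPolynomial

/-- weighted count of factorisations into transpositions -/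
noncomputable def cnt {α : Type*} [Fintype α] [DecidableEq α] : ℕ → Equiv.Perm α → ℚ
  | 0, σ => if σ = 1 then 1 else 0
  | r + 1, σ => (∑ s : α, ∑ t ∈ univ.erase s, cnt r (σ * Equiv.swap s t)) / 2

noncomputable def genG {α : Type*} [Fintype α] [DecidableEq α] (N r : ℕ) : MvPolynomial (Fin N) ℚ :=
  ∑ σ : Equiv.Perm α, cnt r σ • powP N σ

/-- content eigenvalue -/
noncomputable def cc (N d : ℕ) (l : Fin N → ℕ) : ℚ :=
  ((∑ i, (l i : ℚ) ^ 2) - ((∑ k ∈ range N, (k : ℚ) ^ 2) + (2 * N - 1) * d)) / 2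

theorem genG_succ {α : Type*} [Fintype α] [DecidableEq α] (N r : ℕ) :
    genG (α := α) N (r + 1) * vdm N =
      (1/2 : ℚ) • (∑ i, eul i (eul i (genG (α := α) N r * vdm N)) - ((∑ k ∈ range N, (k : ℚ) ^ 2) +
        (2 * N - 1) * Fintype.card α) • (genG (α := α) N r * vdm N)) := by
  have h1 : genG (α := α) N (r+1) = (1/2 : ℚ) • ∑ σ : Equiv.Perm α, cnt r σ •
      (∑ s : α, ∑ t ∈ univ.erase s, powP N (σ * Equiv.swap s t)) := by
    simp only [genG, cnt, smul_sum]
    simp only [div_eq_inv_mul, mul_smul, sum_smul, smul_sum]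
    rw [sum_comm]
    conv_rhs => rw [sum_comm]
    refine sum_congr rfl fun s _ => ?_
    rw [sum_comm]
    conv_rhs => rw [sum_comm]
    refine sum_congr rfl fun t _ => ?_
    rw [← Equiv.sum_comp (Equiv.mulRight (Equiv.swap s t))]
    simp [mul_assoc]
  rw [h1, smul_mul_assoc, sum_mul]
  congr 1
  simp only [smul_mul_assoc, cut_join]
  simp only [genG, sum_mul, smul_mul_assoc, eul_sum, eul_smul, smul_sub, sum_sub_distrib, smul_sum]
  rw [sum_comm]
  congr 1
  refine sum_congr rfl fun σ _ => ?_
  rw [smul_smul, smul_smul, mul_comm]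

theorem fn_genG {α : Type*} [Fintype α] [DecidableEq α] (N r : ℕ) (m : Fin N → ℕ) :
    fn (genG (α := α) N r * vdm N) m = cc N (Fintype.card α) m ^ r *
      fn (powP N (1 : Equiv.Perm α) * vdm N) m := by
  induction r with
  | zero => simp [genG, cnt, ite_smul]
  | succ r ih =>
    rw [genG_succ, pow_succ', mul_assoc, ← ih]
    simp only [fn, coeff_smul, coeff_sub, coeff_sum, coeff_eul, cc, smul_eq_mul]
    simp only [← mul_assoc, ← sum_mul]
    simp only [Finsupp.equivFunOnFinite_symm_apply_apply]
    simp only [← pow_two]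
    ring

theorem fn_sum {N : ℕ} {ι : Type*} (s : Finset ι) (h : ι → MvPolynomial (Fin N) ℚ) :
    fn (∑ i ∈ s, h i) = ∑ i ∈ s, fn (h i) := by
  funext m; simp [fn, coeff_sum]

theorem fn_smul {N : ℕ} (c : ℚ) (h : MvPolynomial (Fin N) ℚ) :
    fn (c • h) = c • fn h := by
  funext m; simp [fn]

theorem iter_sum {N : ℕ} {ι : Type*} (n : ℕ) (s : Finset ι) (f : ι → (Fin N → ℕ) → ℚ) :
    opS^[n] (∑ i ∈ s, f i) = ∑ i ∈ s, opS^[n] (f i) := by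
  induction n with
  | zero => rfl
  | succ n ih =>
    rw [Function.iterate_succ_apply', ih]
    simp only [Function.iterate_succ_apply']
    funext m
    simp only [opS, Finset.sum_apply]
    rw [sum_comm]

theorem fn_vdm_id (N : ℕ) : fn (vdm N) (fun i => (i : ℕ)) = 1 := by
  rw [fn, vdm_eq_sum, coeff_sum, sum_eq_single 1]
  · have : Finsupp.equivFunOnFinite.symm (fun i : Fin N => (i : ℕ)) = stair 1 := rfl
    rw [this]; simp
  · intro κ _ hκ
    rw [coeff_smul, coeff_monomial, if_neg, smul_zero]
    intro h
    apply hκ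
    ext i
    have := DFunLike.congr_fun h i
    simpa using this
  · simp

theorem cnt_extract {α : Type} [Fintype α] [DecidableEq α] {N : ℕ} (hN : Fintype.card α ≤ N) (r : ℕ) :
    opS^[Fintype.card α] (fun m => cc N (Fintype.card α) m ^ r *
      fn (powP N (1 : Equiv.Perm α) * vdm N) m) (fun i => (i : ℕ)) =
      (Fintype.card α).factorial * cnt r (1 : Equiv.Perm α) := by
  have h1 : (fun m => cc N (Fintype.card α) m ^ r * fn (powP N (1 : Equiv.Perm α) * vdm N) m) =
      ∑ σ : Equiv.Perm α, cnt r σ • fn (powP N σ * vdm N) := by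
    funext m
    rw [← fn_genG, genG, sum_mul, fn_sum]
    simp only [smul_mul_assoc, fn_smul]
  rw [h1, iter_sum]
  simp only [iter_smul, extract hN]
  rw [sum_eq_single 1]
  · simp [fn_vdm_id]; ring
  · intro b _ hb; simp [hb]
  · simp

/-- pairing functional -/
noncomputable def ell {N : ℕ} (f : (Fin N → ℕ) → ℚ) (m : Fin N → ℕ) : MvPolynomial (Fin N) ℚ →ₗ[ℚ] ℚ :=
  (basisMonomials (Fin N) ℚ).constr ℚ (fun n => f (fun i => m i + n i))

theorem ell_monomial {N : ℕ} (f : (Fin N → ℕ) → ℚ) (m : Fin N → ℕ) (n : Fin N →₀ ℕ) (c : ℚ) :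
    ell f m (monomial n c) = c * f (fun i => m i + n i) := by
  have h : monomial n c = c • basisMonomials (Fin N) ℚ n := by
    rw [coe_basisMonomials, smul_monomial, smul_eq_mul, mul_one]
  rw [h, map_smul, ell, Module.Basis.constr_basis, smul_eq_mul]

theorem ell_X_mul {N : ℕ} (f : (Fin N → ℕ) → ℚ) (m : Fin N → ℕ) (i : Fin N) (h : MvPolynomial (Fin N) ℚ) :
    ell f m (X i * h) = ell f (Function.update m i (m i + 1)) h := by
  induction h using MvPolynomial.induction_on' with
  | monomial n c =>
    rw [X, monomial_mul, one_mul, ell_monomial, ell_monomial]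
    congr 2
    funext j
    by_cases hj : j = i
    · subst hj; simp; ring
    · simp [hj, Finsupp.single_apply, Ne.symm hj]
  | add p q hp hq => rw [mul_add, map_add, map_add, hp, hq]

theorem ell_pow {N : ℕ} (f : (Fin N → ℕ) → ℚ) (d : ℕ) (m : Fin N → ℕ) :
    ell f m ((∑ i, X i) ^ d) = opS^[d] f m := by
  induction d generalizing m with
  | zero =>
    rw [pow_zero, ← C_1, ← monomial_zero', ell_monomial]
    simp
  | succ d ih =>
    rw [pow_succ', sum_mul, map_sum, Function.iterate_succ_apply']
    simp only [ell_X_mul, ih, opS]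

theorem pow_eq_sum {N : ℕ} (d : ℕ) : (∑ i, (X i : MvPolynomial (Fin N) ℚ)) ^ d =
    ∑ n ∈ piAntidiag univ d, monomial (Finsupp.equivFunOnFinite.symm n) ((d.factorial : ℚ) *
      ∏ i, ((n i).factorial : ℚ)⁻¹) := by
  rw [sum_pow_eq_sum_piAntidiag]
  refine sum_congr rfl fun n hn => ?_
  have h1 : monomial (Finsupp.equivFunOnFinite.symm n) ((d.factorial : ℚ) *
      ∏ i, ((n i).factorial : ℚ)⁻¹) = C ((d.factorial : ℚ) *
      ∏ i, ((n i).factorial : ℚ)⁻¹) * monomial (Finsupp.equivFunOnFinite.symm n) 1 := by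
    rw [C_mul_monomial, mul_one]
  rw [h1, monomial_eq_prod]
  simp only [Finsupp.equivFunOnFinite_symm_apply_apply]
  congr 1
  rw [← map_natCast (C : ℚ →+* MvPolynomial (Fin N) ℚ)]
  congr 1
  rw [mem_piAntidiag] at hn
  have h2 := Nat.multinomial_spec (univ : Finset (Fin N)) n
  rw [hn.1] at h2
  rw [← h2]
  push_cast
  rw [prod_inv_distrib]
  field_simp

/-- inverse factorial `1/(l-k)!` -/
noncomputable def qq (l k : ℕ) : ℚ := if k ≤ l then ((l - k).factorial : ℚ)⁻¹ else 0

theorem fn_pow_vdm {N : ℕ} (d : ℕ) (l : Fin N → ℕ) (hl : ∑ i, l i = ∑ i ∈ range N, i + d) :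
    fn ((∑ i, (X i : MvPolynomial (Fin N) ℚ)) ^ d * vdm N) l =
     (d.factorial : ℚ) * ∑ κ : Equiv.Perm (Fin N), ((Equiv.Perm.sign κ : ℤ) : ℚ) * ∏ i, qq (l i) (κ i) := by
  rw [vdm_eq_sum, mul_sum, fn_sum, Finset.sum_apply, mul_sum]
  refine sum_congr rfl fun κ _ => ?_
  rw [mul_smul_comm, fn_smul, Pi.smul_apply, smul_eq_mul, mul_left_comm]
  congr 1
  rw [fn, coeff_mul_monomial', mul_one]
  by_cases h : stair κ ≤ Finsupp.equivFunOnFinite.symm l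
  · rw [if_pos h]
    have h' : ∀ i, (κ i : ℕ) ≤ l i := fun i => h i
    have hs : ∑ i, (l i - κ i) = d := by
      have h3 : ∑ i, (l i - κ i) + ∑ i, (κ i : ℕ) = ∑ i, l i := by
        rw [← sum_add_distrib]
        exact sum_congr rfl fun i _ => Nat.sub_add_cancel (h' i)
      rw [Equiv.sum_comp κ (fun x => (x : ℕ)), Fin.sum_univ_eq_sum_range (fun x => x), hl] at h3
      omega
    rw [pow_eq_sum, coeff_sum, sum_eq_single (fun i => l i - κ i)]
    · rw [coeff_monomial, if_pos]
      · simp [qq, h']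
      · ext i; simp
    · intro n _ hn
      rw [coeff_monomial, if_neg]
      intro h4
      apply hn
      funext i
      have := DFunLike.congr_fun h4 i
      simpa using this
    · intro h5
      exact absurd (by simp [hs]) h5
  · rw [if_neg h]
    symm
    have : ∃ i, ¬ (κ i : ℕ) ≤ l i := by
      by_contra hc
      push Not at hc
      exact h hc
    obtain ⟨i, hi⟩ := this
    rw [prod_eq_zero (mem_univ i), mul_zero]
    simp [qq, hi]

theorem count_formula {N d : ℕ} (hd : d ≤ N) (r : ℕ) :
    cnt r (1 : Equiv.Perm (Fin d)) / d.factorial =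
    ∑ l ∈ piAntidiag (univ : Finset (Fin N)) (∑ i ∈ range N, i + d), cc N d l ^ r *
      ((∏ i, qq (l i) i) * ∑ κ : Equiv.Perm (Fin N), ((Equiv.Perm.sign κ : ℤ) : ℚ) * ∏ i, qq (l i) (κ i)) := by
  have h1 := cnt_extract (α := Fin d) (N := N) (by simpa using hd) r
  rw [powP_one, Fintype.card_fin] at h1
  rw [← ell_pow, pow_eq_sum, map_sum] at h1
  simp only [ell_monomial, Finsupp.equivFunOnFinite_symm_apply_apply, pow_one] at h1
  have hf : (d.factorial : ℚ) ≠ 0 := by positivity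
  have h2 : cnt r (1 : Equiv.Perm (Fin d)) / d.factorial =
    (d.factorial * cnt r (1 : Equiv.Perm (Fin d))) / (d.factorial : ℚ)^2 := by field_simp
  rw [h2, ← h1, sum_div]
  refine sum_of_injOn (fun n i => (i : ℕ) + n i) ?_ ?_ ?_ ?_
  · intro n _ n' _ h
    funext i
    have := congrFun h i
    simpa using this
  · intro n hn
    simp only [mem_coe, mem_piAntidiag] at hn ⊢
    refine ⟨?_, by simp⟩
    rw [sum_add_distrib, hn.1, Fin.sum_univ_eq_sum_range (fun x => x)]
  · intro l hl hl2
    rw [mem_piAntidiag] at hl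
    have : ∃ i : Fin N, ¬ (i : ℕ) ≤ l i := by
      by_contra hc
      push Not at hc
      apply hl2
      refine ⟨fun i => l i - i, ?_, ?_⟩
      · rw [mem_coe, mem_piAntidiag]
        refine ⟨?_, by simp⟩
        have h3 : ∑ i, (l i - i) + ∑ i : Fin N, (i : ℕ) = ∑ i, l i := by
          rw [← sum_add_distrib]
          exact sum_congr rfl fun i _ => Nat.sub_add_cancel (hc i)
        rw [Fin.sum_univ_eq_sum_range (fun x => x), hl.1] at h3
        omega
      · funext i
        have := hc i
        simp only
        omega
    obtain ⟨i, hi⟩ := this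
    have : ∏ i, qq (l i) i = 0 := prod_eq_zero (mem_univ i) (by simp [qq, hi])
    rw [this, zero_mul, mul_zero]
  · intro n hn
    rw [mem_piAntidiag] at hn
    rw [fn_pow_vdm]
    · have : ∏ i : Fin N, qq ((i : ℕ) + n i) i = ∏ i, ((n i).factorial : ℚ)⁻¹ := by
        refine prod_congr rfl fun i _ => by simp [qq]
      rw [this]
      field_simp
    · rw [sum_add_distrib, hn.1, Fin.sum_univ_eq_sum_range (fun x => x)]

end HurwitzToda

namespace HurwitzToda
open Finset

/-- `exp (c u)` as a power series in `u` -/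
noncomputable def ex (c : ℚ) : PowerSeries ℚ := PowerSeries.rescale c (PowerSeries.exp ℚ)

theorem coeff_ex (c : ℚ) (r : ℕ) : PowerSeries.coeff r (ex c) = c ^ r / r.factorial := by
  simp [ex, PowerSeries.coeff_rescale, PowerSeries.coeff_exp, div_eq_mul_inv]

theorem ex_add (a b : ℚ) : ex (a + b) = ex a * ex b :=
  (PowerSeries.exp_mul_exp_eq_exp_add a b).symm

theorem ex_zero : ex 0 = 1 := by simp [ex]

theorem ex_ne_zero (a : ℚ) : ex a ≠ 0 := by
  intro h
  have := congrArg (PowerSeries.coeff 0) h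
  rw [coeff_ex] at this
  simp at this

theorem ex_sum {ι : Type*} (s : Finset ι) (f : ι → ℚ) : ex (∑ i ∈ s, f i) = ∏ i ∈ s, ex (f i) := by
  classical
  induction s using Finset.induction_on with
  | empty => simp [ex_zero]
  | insert a s ha ih => rw [sum_insert ha, prod_insert ha, ex_add, ih]

noncomputable def tau (d : ℕ) : PowerSeries ℚ :=
  PowerSeries.mk (fun r => cnt r (1 : Equiv.Perm (Fin d)) / d.factorial / r.factorial)

noncomputable def MM (i j : ℕ) : PowerSeries (PowerSeries ℚ) :=
  PowerSeries.mk (fun l => (qq l i * qq l j) • ex ((l : ℚ) * (l - 1) / 2))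

noncomputable def TT (N : ℕ) : PowerSeries (PowerSeries ℚ) :=
  (Matrix.of (fun i j : Fin N => MM i j)).det

noncomputable def e0 (N : ℕ) : ℚ := ∑ k ∈ range N, (k : ℚ) * (k - 1) / 2

theorem coeff_TT (N n : ℕ) : PowerSeries.coeff n (TT N) =
    ∑ l ∈ piAntidiag (univ : Finset (Fin N)) n,
      ((∏ i, qq (l i) i) * ∑ κ : Equiv.Perm (Fin N), ((Equiv.Perm.sign κ : ℤ) : ℚ) * ∏ i, qq (l i) (κ i)) •
        ex (∑ i, (l i : ℚ) * (l i - 1) / 2) := by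
  rw [TT, Matrix.det_apply, map_sum]
  simp only [Units.smul_def, map_zsmul, PowerSeries.coeff_prod, Matrix.of_apply, MM,
    PowerSeries.coeff_mk]
  have h : ∀ κ : Equiv.Perm (Fin N), ∑ x ∈ finsuppAntidiag univ n,
      ∏ x_1, (qq (x x_1) (κ x_1) * qq (x x_1) x_1) • ex ((x x_1 : ℚ) * (x x_1 - 1) / 2) =
      ∑ l ∈ piAntidiag (univ : Finset (Fin N)) n,
      ∏ x_1, (qq (l x_1) (κ x_1) * qq (l x_1) x_1) • ex ((l x_1 : ℚ) * (l x_1 - 1) / 2) := by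
    intro κ
    refine sum_nbij' (fun l => (l : Fin N → ℕ)) (fun l => Finsupp.equivFunOnFinite.symm l) ?_ ?_ ?_ ?_ ?_
    · intro l hl; rw [mem_finsuppAntidiag] at hl; rw [mem_piAntidiag]; exact ⟨hl.1, by simp⟩
    · intro l hl; rw [mem_piAntidiag] at hl; rw [mem_finsuppAntidiag]; exact ⟨hl.1, by simp⟩
    · intro l _; ext; simp
    · intro l _; ext; simp
    · intro l _; rfl
  simp only [h]
  simp only [mul_sum, sum_smul, smul_sum]
  rw [sum_comm]
  refine sum_congr rfl fun l _ => sum_congr rfl fun κ _ => ?_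
  rw [← Int.cast_smul_eq_zsmul ℚ, ex_sum]
  rw [Finset.prod_smul, smul_smul, prod_mul_distrib]
  congr 1
  ring

theorem coeff_TT_lt (N n : ℕ) (h : n < ∑ i ∈ range N, i) : PowerSeries.coeff n (TT N) = 0 := by
  rw [coeff_TT]
  refine sum_eq_zero fun l hl => ?_
  rw [mem_piAntidiag] at hl
  have : ∃ i : Fin N, ¬ (i : ℕ) ≤ l i := by
    by_contra hc
    push Not at hc
    have := sum_le_sum (s := univ) fun i _ => hc i
    rw [Fin.sum_univ_eq_sum_range (fun x => x), hl.1] at this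
    omega
  obtain ⟨i, hi⟩ := this
  rw [prod_eq_zero (mem_univ i) (by simp [qq, hi]), zero_mul, zero_smul]

theorem coeff_TT_add (N d : ℕ) (h : d ≤ N) : PowerSeries.coeff (∑ i ∈ range N, i + d) (TT N) =
    ex (e0 N + ((N : ℚ) - 1) * d) * tau d := by
  have h1 : tau d = ∑ l ∈ piAntidiag (univ : Finset (Fin N)) (∑ i ∈ range N, i + d),
      ((∏ i, qq (l i) i) * ∑ κ : Equiv.Perm (Fin N), ((Equiv.Perm.sign κ : ℤ) : ℚ) * ∏ i, qq (l i) (κ i)) •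
        ex (cc N d l) := by
    ext r
    rw [tau, PowerSeries.coeff_mk, count_formula h, map_sum, sum_div]
    refine sum_congr rfl fun l _ => ?_
    rw [PowerSeries.coeff_smul, coeff_ex]
    ring
  rw [h1, coeff_TT, mul_sum]
  refine sum_congr rfl fun l hl => ?_
  rw [mul_smul_comm, ← ex_add]
  congr 2
  rw [mem_piAntidiag] at hl
  have h2 : (∑ i, (l i : ℚ)) = ∑ k ∈ range N, (k : ℚ) + d := by
    have := congrArg (Nat.cast : ℕ → ℚ) hl.1
    push_cast at this
    exact this
  have h3 : (∑ i, (l i : ℚ) * (l i - 1) / 2) = (∑ i, (l i : ℚ) ^ 2) / 2 - (∑ i, (l i : ℚ)) / 2 := by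
    rw [sum_div, sum_div, ← sum_sub_distrib]
    exact sum_congr rfl fun i _ => by ring
  have h4 : e0 N = (∑ k ∈ range N, (k : ℚ) ^ 2) / 2 - (∑ k ∈ range N, (k : ℚ)) / 2 := by
    rw [e0, sum_div, sum_div, ← sum_sub_distrib]
    exact sum_congr rfl fun i _ => by ring
  rw [h3, h4, h2, cc]
  ring

end HurwitzToda

namespace HurwitzToda
open Finset

/-- Euler operator `y d/dy` on power series -/
noncomputable def DD {A : Type*} [CommRing A] (f : PowerSeries A) : PowerSeries A :=
  PowerSeries.X * PowerSeries.derivative A f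

theorem DD_mul {A : Type*} [CommRing A] (f g : PowerSeries A) : DD (f * g) = DD f * g + f * DD g := by
  simp only [DD, Derivation.leibniz, smul_eq_mul]; ring

theorem DD_add {A : Type*} [CommRing A] (f g : PowerSeries A) : DD (f + g) = DD f + DD g := by
  simp only [DD, map_add]; ring

theorem DD_sub {A : Type*} [CommRing A] (f g : PowerSeries A) : DD (f - g) = DD f - DD g := by
  simp only [DD, map_sub]; ring

theorem DD_one {A : Type*} [CommRing A] : DD (1 : PowerSeries A) = 0 := by
  simp [DD, PowerSeries.derivative_one]

theorem DD_zero {A : Type*} [CommRing A] : DD (0 : PowerSeries A) = 0 := by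
  simp [DD]

theorem DD_C_mul {A : Type*} [CommRing A] (c : A) (f : PowerSeries A) :
    DD (PowerSeries.C c * f) = PowerSeries.C c * DD f := by
  rw [DD_mul]; simp [DD]

theorem DD_natCast_mul {A : Type*} [CommRing A] (c : ℕ) (f : PowerSeries A) :
    DD ((c : PowerSeries A) * f) = c * DD f := by
  rw [← map_natCast (PowerSeries.C (R := A)), DD_C_mul]

theorem DD_sum {A ι : Type*} [CommRing A] (s : Finset ι) (f : ι → PowerSeries A) :
    DD (∑ i ∈ s, f i) = ∑ i ∈ s, DD (f i) := by
  simp only [DD, map_sum, mul_sum]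

theorem DD_zsmul {A : Type*} [CommRing A] (c : ℤ) (f : PowerSeries A) :
    DD (c • f) = c • DD f := by
  simp only [DD, map_zsmul, mul_smul_comm]

theorem coeff_DD {A : Type*} [CommRing A] (n : ℕ) (f : PowerSeries A) :
    PowerSeries.coeff n (DD f) = n * PowerSeries.coeff n f := by
  cases n with
  | zero => simp [DD]
  | succ n =>
    rw [DD, PowerSeries.coeff_succ_X_mul, PowerSeries.coeff_derivative]
    push_cast; ring

theorem deriv_det {S n : Type*} [CommRing S] [Fintype n] [DecidableEq n] (D : S →+ S)
    (hmul : ∀ x y, D (x * y) = D x * y + x * D y) (h1 : D 1 = 0) (M : Matrix n n S) :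
    D M.det = ∑ j, (M.updateRow j (fun k => D (M j k))).det := by
  have hdet : ∀ M : Matrix n n S, M.det =
      ∑ κ : Equiv.Perm n, (Equiv.Perm.sign κ : ℤ) • ∏ i, M i (κ i) := by
    intro M
    rw [← Matrix.det_transpose, Matrix.det_apply]
    simp [Units.smul_def]
  rw [hdet, map_sum]
  simp only [hdet]
  rw [sum_comm]
  refine sum_congr rfl fun κ _ => ?_
  rw [map_zsmul, deriv_prod D hmul h1, smul_sum]
  refine sum_congr rfl fun j _ => ?_
  congr 1
  rw [← mul_prod_erase _ _ (mem_univ j), mul_comm]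
  congr 1
  · rw [Matrix.updateRow_self]
  · refine prod_congr rfl fun i hi => ?_
    rw [Matrix.updateRow_ne (ne_of_mem_erase hi)]

noncomputable def DDhom (A : Type*) [CommRing A] : PowerSeries A →+ PowerSeries A :=
  AddMonoidHom.mk' DD DD_add

theorem DD_det {A n : Type*} [CommRing A] [Fintype n] [DecidableEq n] (M : Matrix n n (PowerSeries A)) :
    DD M.det = ∑ j, (M.updateRow j (fun k => DD (M j k))).det := by
  have h := deriv_det (DDhom A) (fun x y => DD_mul x y) DD_one M
  exact h

/-- bordered index -/
def idx (n a : ℕ) : Fin n ⊕ Unit → ℕ := Sum.elim (fun i => (i : ℕ)) (fun _ => a)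

theorem DD_det_shift {A : Type*} [CommRing A] (n : ℕ) (M : ℕ → (Fin n ⊕ Unit) → PowerSeries A)
    (hD : ∀ i k, DD (M i k) = M (i + 1) k + (i : PowerSeries A) * M i k) :
    DD (Matrix.of (fun i k => M (idx n n i) k)).det =
      (Matrix.of (fun i k => M (idx n (n + 1) i) k)).det +
      ((∑ i ∈ range (n + 1), i : ℕ) : PowerSeries A) * (Matrix.of (fun i k => M (idx n n i) k)).det := by
  rw [DD_det]
  set B : Matrix (Fin n ⊕ Unit) (Fin n ⊕ Unit) (PowerSeries A) :=
    Matrix.of (fun i k => M (idx n n i) k) with hB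
  have h1 : ∀ j, (B.updateRow j (fun k => DD (B j k))).det =
      (B.updateRow j (M (idx n n j + 1))).det + (idx n n j : PowerSeries A) * B.det := by
    intro j
    have : (fun k => DD (B j k)) = M (idx n n j + 1) + (idx n n j : PowerSeries A) • B j := by
      funext k
      simp [hB, hD]
    rw [this, Matrix.det_updateRow_add, Matrix.det_updateRow_smul, Matrix.updateRow_eq_self]
  simp only [h1, sum_add_distrib, Fintype.sum_sum_type, ← sum_mul]
  have h2 : ∀ i : Fin n, (B.updateRow (Sum.inl i) (M (idx n n (Sum.inl i) + 1))).det = 0 := by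
    intro i
    by_cases hi : (i : ℕ) + 1 < n
    · apply Matrix.det_zero_of_row_eq (i := Sum.inl i) (j := Sum.inl ⟨i + 1, hi⟩)
      · intro h
        simp [Fin.ext_iff] at h
      · rw [Matrix.updateRow_self, Matrix.updateRow_ne (by simp [Fin.ext_iff])]
        funext k
        simp [hB, idx]
    · apply Matrix.det_zero_of_row_eq (i := Sum.inl i) (j := Sum.inr ())
      · simp
      · rw [Matrix.updateRow_self, Matrix.updateRow_ne (by simp)]
        funext k
        have : (i : ℕ) + 1 = n := by omega
        simp [hB, idx, this]
  simp only [h2, sum_const_zero, zero_add]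
  have h3 : B.updateRow (Sum.inr ()) (M (idx n n (Sum.inr ()) + 1)) =
      Matrix.of (fun i k => M (idx n (n + 1) i) k) := by
    ext i k : 2
    rcases i with i | i
    · rw [Matrix.updateRow_ne (by simp)]; simp [hB, idx]
    · rw [Matrix.updateRow_self]; simp [idx]
  simp only [univ_unique, PUnit.default_eq_unit, sum_singleton]
  rw [h3]
  congr 2
  simp only [idx, Sum.elim_inl, Sum.elim_inr]
  rw [sum_range_succ]
  push_cast
  rw [← Fin.sum_univ_eq_sum_range (fun x => (x : PowerSeries A))]

/-- bordered determinant -/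
noncomputable def bd {A : Type*} [CommRing A] (M : ℕ → ℕ → A) (n a b : ℕ) : A :=
  (Matrix.of (fun i k => M (idx n a i) (idx n b k))).det

noncomputable def pdet {A : Type*} [CommRing A] (M : ℕ → ℕ → A) (n : ℕ) : A :=
  (Matrix.of (fun i k : Fin n => M i k)).det

theorem pdet_succ {A : Type*} [CommRing A] (M : ℕ → ℕ → A) (n : ℕ) : pdet M (n + 1) = bd M n n n := by
  let e : Fin n ⊕ Unit ≃ Fin (n + 1) :=
    (Equiv.sumCongr (Equiv.refl _) (Equiv.ofUnique Unit (Fin 1))).trans finSumFinEquiv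
  have he : ∀ i, ((e i : Fin (n+1)) : ℕ) = idx n n i := by
    rintro (i | i) <;> simp [e, idx]
  rw [pdet, bd, ← Matrix.det_submatrix_equiv_self e]
  congr 1
  ext i k
  simp [he]

theorem bd_det {K : Type*} [Field K] (M : ℕ → ℕ → K) (n a b : ℕ) (h : pdet M n ≠ 0) :
    bd M n a b = pdet M n * (M a b - ∑ i : Fin n, ∑ j : Fin n, M a i *
      ((Matrix.of (fun i k : Fin n => M i k))⁻¹ i j) * M j b) := by
  have hu : IsUnit (Matrix.of (fun i k : Fin n => M i k)).det := isUnit_iff_ne_zero.2 h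
  let _ := Matrix.invertibleOfIsUnitDet _ hu
  have h1 : (Matrix.of (fun i k => M (idx n a i) (idx n b k))) =
      Matrix.fromBlocks (Matrix.of (fun i k : Fin n => M i k)) (Matrix.of (fun (i : Fin n) (_ : Unit) => M i b))
        (Matrix.of (fun (_ : Unit) (k : Fin n) => M a k)) (Matrix.of (fun (_ _ : Unit) => M a b)) := by
    ext (i | i) (k | k) <;> simp [idx]
  rw [bd, h1, Matrix.det_fromBlocks₁₁, pdet]
  congr 1
  rw [Matrix.det_unique]
  simp only [Matrix.sub_apply, Matrix.mul_apply, Matrix.of_apply, sum_mul, Matrix.invOf_eq_nonsing_inv]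
  rw [sum_comm]

theorem pdet_two {K : Type*} [Field K] (M : ℕ → ℕ → K) (n : ℕ) (h : pdet M n ≠ 0) :
    pdet M (n + 2) * pdet M n = bd M n n n * bd M n (n+1) (n+1) - bd M n (n+1) n * bd M n n (n+1) := by
  have hu : IsUnit (Matrix.of (fun i k : Fin n => M i k)).det := isUnit_iff_ne_zero.2 h
  let _ := Matrix.invertibleOfIsUnitDet _ hu
  have h1 : (Matrix.of (fun i k : Fin (n+2) => M i k)).submatrix finSumFinEquiv finSumFinEquiv =
      Matrix.fromBlocks (Matrix.of (fun i k : Fin n => M i k))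
        (Matrix.of (fun (i : Fin n) (k : Fin 2) => M i (n + k)))
        (Matrix.of (fun (i : Fin 2) (k : Fin n) => M (n + i) k))
        (Matrix.of (fun (i k : Fin 2) => M (n + i) (n + k))) := by
    ext (i | i) (k | k) <;> simp
  rw [bd_det _ _ _ _ h, bd_det _ _ _ _ h, bd_det _ _ _ _ h, bd_det _ _ _ _ h]
  have h2 : pdet M (n+2) = (Matrix.of (fun i k : Fin (n+2) => M i k)).det := rfl
  rw [h2, ← Matrix.det_submatrix_equiv_self finSumFinEquiv, h1, Matrix.det_fromBlocks₁₁,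
    Matrix.det_fin_two]
  simp only [Matrix.sub_apply, Matrix.mul_apply, Matrix.of_apply, sum_mul, Matrix.invOf_eq_nonsing_inv]
  have h3 : ∀ a b : ℕ, ∑ x : Fin n, ∑ i : Fin n, M a i * ((Matrix.of (fun i k : Fin n => M i k))⁻¹ i x) * M x b
    = ∑ i : Fin n, ∑ j : Fin n, M a i *
      ((Matrix.of (fun i k : Fin n => M i k))⁻¹ i j) * M j b := fun a b => sum_comm
  simp only [h3]
  have h4 : (Matrix.of (fun i k : Fin n => M i k)).det = pdet M n := rfl
  rw [h4]
  simp only [Fin.val_zero, Fin.val_one, add_zero]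
  ring

theorem pdet_two' {A : Type*} [CommRing A] [IsDomain A] (M : ℕ → ℕ → A) (n : ℕ) (h : pdet M n ≠ 0) :
    pdet M (n + 2) * pdet M n = bd M n n n * bd M n (n+1) (n+1) - bd M n (n+1) n * bd M n n (n+1) := by
  let φ := algebraMap A (FractionRing A)
  have hφ : Function.Injective φ := IsFractionRing.injective A (FractionRing A)
  have h1 : ∀ n, φ (pdet M n) = pdet (fun i j => φ (M i j)) n := by
    intro n
    rw [pdet, RingHom.map_det]; rfl
  have h2 : ∀ n a b, φ (bd M n a b) = bd (fun i j => φ (M i j)) n a b := by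
    intro n a b
    rw [bd, RingHom.map_det]; rfl
  apply hφ
  simp only [map_mul, map_sub, h1, h2]
  apply pdet_two
  rw [← h1]
  exact fun h0 => h (hφ (by rw [h0, map_zero]))

end HurwitzToda

namespace HurwitzToda
open Finset

theorem qq_succ (l i : ℕ) : (l : ℚ) * qq l i = qq l (i + 1) + i * qq l i := by
  rcases lt_trichotomy l i with h | h | h
  · simp [qq, show ¬ i ≤ l by omega, show ¬ i + 1 ≤ l by omega]
  · subst h; simp [qq]
  · obtain ⟨k, rfl⟩ : ∃ k, l = i + 1 + k := ⟨l - (i+1), by omega⟩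
    simp only [qq, show i ≤ i + 1 + k by omega, show i + 1 ≤ i + 1 + k by omega, if_true]
    rw [show i + 1 + k - i = k + 1 by omega, show i + 1 + k - (i + 1) = k by omega, Nat.factorial_succ]
    push_cast
    have : (k.factorial : ℚ) ≠ 0 := by positivity
    field_simp
    ring

theorem DD_MM (i j : ℕ) : DD (MM i j) = MM (i + 1) j + (i : PowerSeries (PowerSeries ℚ)) * MM i j := by
  ext l : 1
  have h2 : ∀ (c : ℕ) (f : PowerSeries ℚ), (c : PowerSeries ℚ) * f = (c : ℚ) • f := by
    intro c f
    rw [Nat.cast_smul_eq_nsmul, nsmul_eq_mul]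
  rw [coeff_DD, map_add, ← map_natCast (PowerSeries.C (R := PowerSeries ℚ)), PowerSeries.coeff_C_mul, MM, MM,
    PowerSeries.coeff_mk, PowerSeries.coeff_mk, h2, h2, smul_smul, smul_smul, ← add_smul]
  congr 1
  rw [← mul_assoc, qq_succ]; ring

theorem MM_symm (i j : ℕ) : MM i j = MM j i := by
  simp only [MM, mul_comm]

theorem bd_MM_symm (n a b : ℕ) : bd MM n a b = bd MM n b a := by
  rw [bd, ← Matrix.det_transpose, bd]
  congr 1
  ext i k : 2
  simp [MM_symm (idx n a k)]

theorem DD_bd (n b : ℕ) : DD (bd MM n n b) = bd MM n (n + 1) b +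
    ((∑ i ∈ range (n + 1), i : ℕ) : PowerSeries (PowerSeries ℚ)) * bd MM n n b :=
  DD_det_shift n (fun i k => MM i (idx n b k)) (fun i _ => DD_MM i _)

noncomputable def UU (N : ℕ) : PowerSeries (PowerSeries ℚ) :=
  PowerSeries.mk (fun d => PowerSeries.coeff (∑ i ∈ range N, i + d) (TT N))

theorem TT_eq (N : ℕ) : TT N = PowerSeries.X ^ (∑ i ∈ range N, i) * UU N := by
  ext n : 1
  rw [PowerSeries.coeff_X_pow_mul']
  split_ifs with h
  · rw [UU, PowerSeries.coeff_mk, Nat.add_sub_cancel' h]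
  · exact coeff_TT_lt _ _ (by omega)

theorem DD_X_pow_mul {A : Type*} [CommRing A] (c : ℕ) (f : PowerSeries A) :
    DD (PowerSeries.X ^ c * f) = (c : PowerSeries A) * (PowerSeries.X ^ c * f) + PowerSeries.X ^ c * DD f := by
  rw [DD_mul]
  congr 1
  rw [← mul_assoc]
  congr 1
  rw [DD, Derivation.leibniz_pow, PowerSeries.derivative_X]
  cases c with
  | zero => simp
  | succ c =>
    simp only [Nat.add_sub_cancel, smul_eq_mul, nsmul_eq_mul]
    ring

theorem coeff_UU (N d : ℕ) (h : d ≤ N) : PowerSeries.coeff d (UU N) =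
    ex (e0 N + ((N : ℚ) - 1) * d) * tau d := by
  rw [UU, PowerSeries.coeff_mk, coeff_TT_add _ _ h]

theorem tau_zero : tau 0 = 1 := by
  ext r
  rw [tau, PowerSeries.coeff_mk, PowerSeries.coeff_one]
  cases r with
  | zero => simp [cnt]
  | succ r => simp [cnt]

theorem TT_ne_zero (N : ℕ) : TT N ≠ 0 := by
  intro h
  have h1 := coeff_TT_add N 0 (by omega)
  rw [h, map_zero, tau_zero, mul_one] at h1
  exact ex_ne_zero _ h1.symm

theorem toda_UU (n : ℕ) : PowerSeries.X * (UU (n + 2) * UU n) =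
    UU (n + 1) * DD (DD (UU (n + 1))) - DD (UU (n + 1)) ^ 2 := by
  have h0 := pdet_two' MM n (TT_ne_zero n)
  have e1 := DD_bd n n
  have e2 := DD_bd n (n + 1)
  rw [bd_MM_symm n n (n+1)] at h0 e2
  rw [← pdet_succ] at h0 e1
  have t : ∀ N, pdet MM N = TT N := fun N => rfl
  simp only [t] at h0 e1
  set c := ∑ i ∈ range (n + 1), i with hc
  have s1 : bd MM n (n + 1) n = PowerSeries.X ^ c * DD (UU (n + 1)) := by
    rw [TT_eq, ← hc, DD_X_pow_mul] at e1
    linear_combination - e1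
  have s2 : bd MM n (n + 1) (n + 1) = PowerSeries.X ^ c * DD (DD (UU (n + 1))) := by
    rw [s1, DD_X_pow_mul] at e2
    linear_combination - e2
  rw [s1, s2, TT_eq, TT_eq n, TT_eq (n+1), ← hc] at h0
  have hx : (PowerSeries.X : PowerSeries (PowerSeries ℚ)) ^ (c + c) ≠ 0 :=
    pow_ne_zero _ PowerSeries.X_ne_zero
  apply mul_left_cancel₀ hx
  have h3 : (∑ i ∈ range (n + 2), i) + ∑ i ∈ range n, i = c + c + 1 := by
    rw [hc, sum_range_succ _ (n+1)]
    have := sum_range_succ (fun i => i) n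
    omega
  have h4 : (PowerSeries.X : PowerSeries (PowerSeries ℚ)) ^ (∑ i ∈ range (n + 2), i) *
     PowerSeries.X ^ (∑ i ∈ range n, i) = PowerSeries.X ^ (c + c) * PowerSeries.X := by
    rw [← pow_add, h3, pow_succ]
  calc _ = (PowerSeries.X ^ (c + c) * PowerSeries.X) * (UU (n+2) * UU n) := by ring
    _ = _ := by rw [← h4]; linear_combination h0

noncomputable def tauS : PowerSeries (PowerSeries ℚ) := PowerSeries.mk tau

/-- `τ(y e^{cu})` -/
noncomputable def tauE (c : ℚ) : PowerSeries (PowerSeries ℚ) := PowerSeries.mk (fun d => ex (c * d) * tau d)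

theorem toda : PowerSeries.X * (tauE 1 * tauE (-1)) = tauS * DD (DD tauS) - DD tauS ^ 2 := by
  ext m : 1
  have h := congrArg (PowerSeries.coeff m) (toda_UU m)
  have hE : ex (2 * e0 (m + 1) + m * m) ≠ 0 := ex_ne_zero _
  apply mul_left_cancel₀ hE
  rw [pow_two, map_sub] at h ⊢
  have r1 : PowerSeries.coeff m ((UU (m+1)) * (DD (DD (UU (m+1))))) =
      ex (2 * e0 (m + 1) + m * m) * PowerSeries.coeff m (tauS * (DD (DD tauS))) := by
    rw [PowerSeries.coeff_mul, PowerSeries.coeff_mul, mul_sum]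
    refine sum_congr rfl fun p hp => ?_
    rw [Finset.HasAntidiagonal.mem_antidiagonal] at hp
    simp only [coeff_DD]
    rw [coeff_UU _ _ (by omega), coeff_UU _ _ (by omega), tauS, PowerSeries.coeff_mk, PowerSeries.coeff_mk]
    have : 2 * e0 (m + 1) + m * m = (e0 (m + 1) + (((m+1:ℕ):ℚ) - 1) * (p.1:ℕ)) + (e0 (m + 1) + (((m+1:ℕ):ℚ) - 1) * (p.2:ℕ)) := by
      rw [← hp]; push_cast; ring
    rw [this, ex_add _ (e0 (m + 1) + (((m+1:ℕ):ℚ) - 1) * (p.2:ℕ))]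
    ring
  have r2 : PowerSeries.coeff m ((DD (UU (m+1))) * (DD (UU (m+1)))) =
      ex (2 * e0 (m + 1) + m * m) * PowerSeries.coeff m ((DD tauS) * (DD tauS)) := by
    rw [PowerSeries.coeff_mul, PowerSeries.coeff_mul, mul_sum]
    refine sum_congr rfl fun p hp => ?_
    rw [Finset.HasAntidiagonal.mem_antidiagonal] at hp
    simp only [coeff_DD]
    rw [coeff_UU _ _ (by omega), coeff_UU _ _ (by omega), tauS, PowerSeries.coeff_mk, PowerSeries.coeff_mk]
    have : 2 * e0 (m + 1) + m * m = (e0 (m + 1) + (((m+1:ℕ):ℚ) - 1) * (p.1:ℕ)) + (e0 (m + 1) + (((m+1:ℕ):ℚ) - 1) * (p.2:ℕ)) := by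
      rw [← hp]; push_cast; ring
    rw [this, ex_add _ (e0 (m + 1) + (((m+1:ℕ):ℚ) - 1) * (p.2:ℕ))]
    ring
  rw [r1, r2] at h
  rw [mul_sub, ← h]
  cases m with
  | zero => simp
  | succ m =>
    rw [PowerSeries.coeff_succ_X_mul, PowerSeries.coeff_succ_X_mul, PowerSeries.coeff_mul,
      PowerSeries.coeff_mul, mul_sum]
    refine sum_congr rfl fun p hp => ?_
    rw [Finset.HasAntidiagonal.mem_antidiagonal] at hp
    rw [coeff_UU _ _ (by omega), coeff_UU _ _ (by omega), tauE, tauE, PowerSeries.coeff_mk, PowerSeries.coeff_mk]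
    have e3 : e0 (m + 1 + 2) + e0 (m + 1) = 2 * e0 (m + 1 + 1) + ((m:ℚ) + 1) := by
      simp only [e0, sum_range_succ]
      push_cast
      ring
    have e4 : ex (2 * e0 (m + 1 + 1) + ((m + 1 : ℕ) : ℚ) * ((m + 1 : ℕ) : ℚ)) * (ex (1 * (p.1 : ℕ)) * ex (-1 * (p.2 : ℕ))) =
       ex (e0 (m + 1 + 2) + (((m + 1 + 2 : ℕ) : ℚ) - 1) * (p.1 : ℕ)) * ex (e0 (m + 1) + (((m + 1 : ℕ) : ℚ) - 1) * (p.2 : ℕ)) := by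
      rw [← ex_add, ← ex_add, ← ex_add]
      congr 1
      have hp' : (m : ℚ) = (p.1 : ℕ) + (p.2 : ℕ) := by rw [← hp]; push_cast; ring
      push_cast
      linear_combination -e3 + (1 + (m:ℚ)) * hp'
    linear_combination tau p.1 * tau p.2 * e4

end HurwitzToda

namespace HurwitzToda
open Finset

/-- weighted sum over words of length `k` -/
noncomputable def SS {A : Type*} [Fintype A] (w : ℚ) : ℕ → (List A → ℚ) → ℚ
  | 0, f => f []
  | k + 1, f => w * ∑ a : A, SS w k (fun l => f (a :: l))

noncomputable def FF {A : Type*} [Fintype A] (w : ℚ) (f : List A → ℚ) : PowerSeries ℚ :=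
  PowerSeries.mk (fun k => SS w k f / k.factorial)

theorem SS_zero_fun {A : Type*} [Fintype A] (w : ℚ) (k : ℕ) : SS w k (fun _ : List A => 0) = 0 := by
  induction k with
  | zero => rfl
  | succ k ih => simp [SS, ih]

theorem SS_sum {A ι : Type*} [Fintype A] (w : ℚ) (k : ℕ) (s : Finset ι) (f : ι → List A → ℚ) :
    SS w k (fun l => ∑ i ∈ s, f i l) = ∑ i ∈ s, SS w k (f i) := by
  induction k generalizing f with
  | zero => rfl
  | succ k ih =>
    simp only [SS, ih]
    rw [sum_comm, mul_sum]

/-- restriction of the alphabet -/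
theorem SS_emb {A B : Type*} [Fintype A] [Fintype B] (w : ℚ) (e : B → A) (he : Function.Injective e)
    (k : ℕ) (f : List A → ℚ) (hf : ∀ l, f l ≠ 0 → ∀ a ∈ l, a ∈ Set.range e) :
    SS w k f = SS w k (fun l => f (l.map e)) := by
  classical
  induction k generalizing f with
  | zero => rfl
  | succ k ih =>
    simp only [SS]
    congr 1
    have h1 : ∀ b, SS w k (fun l => f (e b :: l)) = SS w k (fun l => f ((b :: l).map e)) := by
      intro b
      rw [ih (fun l => f (e b :: l)) (fun l hl a ha => hf _ hl a (List.mem_cons_of_mem _ ha))]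
      rfl
    simp only [← h1]
    symm
    rw [← sum_image (f := fun a => SS w k (fun l => f (a :: l))) (s := univ) (g := e)
      (fun _ _ _ _ h => he h)]
    apply sum_subset (subset_univ _)
    intro a _ ha
    have : (fun l => f (a :: l)) = fun _ => 0 := by
      funext l
      by_contra hl
      obtain ⟨b, hb⟩ := hf _ hl a (by simp)
      exact ha (by simp [← hb])
    rw [this, SS_zero_fun]

theorem deriv_FF {A : Type*} [Fintype A] (w : ℚ) (f : List A → ℚ) :
    PowerSeries.derivative ℚ (FF w f) = w • ∑ a, FF w (fun l => f (a :: l)) := by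
  ext k
  rw [PowerSeries.coeff_derivative, PowerSeries.coeff_smul, map_sum]
  simp only [FF, PowerSeries.coeff_mk, SS]
  rw [← sum_div, Nat.factorial_succ]
  push_cast
  have : ((k : ℚ) + 1) ≠ 0 := by positivity
  have : (k.factorial : ℚ) ≠ 0 := by positivity
  rw [smul_eq_mul]
  field_simp

def lefts {A B : Type*} : List (A ⊕ B) → List A
  | [] => []
  | Sum.inl a :: l => a :: lefts l
  | Sum.inr _ :: l => lefts l

def rights {A B : Type*} : List (A ⊕ B) → List B
  | [] => []
  | Sum.inl _ :: l => rights l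
  | Sum.inr b :: l => b :: rights l

theorem shuffle {A B : Type*} [Fintype A] [Fintype B] (w : ℚ) (f : List A → ℚ) (g : List B → ℚ) :
    FF w (fun l : List (A ⊕ B) => f (lefts l) * g (rights l)) = FF w f * FF w g := by
  ext k
  induction k generalizing f g with
  | zero =>
    rw [PowerSeries.coeff_mul]
    simp [FF, SS, lefts, rights]
  | succ k ih =>
    have hk : ((k : ℚ) + 1) ≠ 0 := by positivity
    apply mul_right_cancel₀ hk
    rw [← PowerSeries.coeff_derivative, ← PowerSeries.coeff_derivative, deriv_FF, Derivation.leibniz,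
      deriv_FF, deriv_FF, Fintype.sum_sum_type]
    simp only [lefts, rights, smul_eq_mul, PowerSeries.coeff_smul, map_add, map_sum, mul_smul_comm,
      mul_sum]
    rw [add_comm, mul_add, mul_sum, mul_sum]
    congr 1
    · refine sum_congr rfl fun b _ => ?_
      rw [ih f (fun l => g (b :: l))]
    · refine sum_congr rfl fun a _ => ?_
      rw [ih (fun l => f (a :: l)) g, mul_comm (FF w g)]

end HurwitzToda

namespace HurwitzToda
open Finset

/-- ordered pairs of distinct letters -/
abbrev OP (α : Type) : Type := {p : α × α // p.1 ≠ p.2}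

noncomputable instance instFintypeOP (α : Type) [Fintype α] : Fintype (OP α) := Fintype.ofFinite _

section
open Classical
variable {α : Type} [Fintype α] 

noncomputable def sw (p : OP α) : Equiv.Perm α := Equiv.swap p.1.1 p.1.2

noncomputable def prd (l : List (OP α)) : Equiv.Perm α := (l.map sw).prod

noncomputable def indN (l : List (OP α)) : ℚ := if prd l = 1 then 1 else 0

def Inv (l : List (OP α)) (V : Finset α) : Prop := ∀ p ∈ l, (p.1.1 ∈ V ↔ p.1.2 ∈ V)

def Tr (l : List (OP α)) : Prop := ∀ V : Finset α, V.Nonempty → Inv l V → ∀ x, x ∈ V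

def Orb (a : α) (U : Finset α) (l : List (OP α)) : Prop :=
  a ∈ U ∧ Inv l U ∧ ∀ V, a ∈ V → Inv l V → U ⊆ V

noncomputable def indT (l : List (OP α)) : ℚ := if Tr l then 1 else 0

noncomputable def indO (a : α) (U : Finset α) (l : List (OP α)) : ℚ := if Orb a U l then 1 else 0

noncomputable def tt (α : Type) [Fintype α] : PowerSeries ℚ := FF (1/2) (indN : List (OP α) → ℚ)

noncomputable def hh (α : Type) [Fintype α] : PowerSeries ℚ :=
  FF (1/2) (fun l : List (OP α) => indN l * indT l)

theorem sum_indO (a : α) (l : List (OP α)) : ∑ U : Finset α, indO a U l = 1 := by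
  have hex : ∃ U, Orb a U l := by
    refine ⟨univ.filter (fun x => ∀ V : Finset α, a ∈ V → Inv l V → x ∈ V), ?_, ?_, ?_⟩
    · simp; intro V h _; exact h
    · intro p hp
      simp only [mem_filter, mem_univ, true_and]
      constructor
      · intro h V h1 h2; exact (h2 p hp).1 (h V h1 h2)
      · intro h V h1 h2; exact (h2 p hp).2 (h V h1 h2)
    · intro V h1 h2 x hx
      simp only [mem_filter, mem_univ, true_and] at hx
      exact hx V h1 h2
  obtain ⟨U, hU⟩ := hex
  rw [sum_eq_single U]
  · simp [indO, hU]
  · intro V _ hne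
    rw [indO, if_neg]
    intro hV
    exact hne (subset_antisymm (hV.2.2 U hU.1 hU.2.1) (hU.2.2 V hV.1 hV.2.1))
  · simp

/-- embedding of letters -/
def emb (U : Finset α) : OP {x // x ∈ U} ⊕ OP {x // ¬ x ∈ U} → OP α
  | Sum.inl p => ⟨(p.1.1, p.1.2), fun h => p.2 (Subtype.ext h)⟩
  | Sum.inr p => ⟨(p.1.1, p.1.2), fun h => p.2 (Subtype.ext h)⟩

theorem emb_inj (U : Finset α) : Function.Injective (emb U) := by
  rintro (⟨⟨⟨a,ha⟩, ⟨b,hb⟩⟩, hp⟩ | ⟨⟨⟨a,ha⟩, ⟨b,hb⟩⟩, hp⟩) (⟨⟨⟨c,hc⟩, ⟨d,hd⟩⟩, hq⟩ | ⟨⟨⟨c,hc⟩, ⟨d,hd⟩⟩, hq⟩) h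
  · simp only [emb, Subtype.mk.injEq, Prod.mk.injEq] at h
    obtain ⟨rfl, rfl⟩ := h
    rfl
  · simp only [emb, Subtype.mk.injEq, Prod.mk.injEq] at h
    obtain ⟨rfl, rfl⟩ := h
    exact absurd ha hc
  · simp only [emb, Subtype.mk.injEq, Prod.mk.injEq] at h
    obtain ⟨rfl, rfl⟩ := h
    exact absurd hc ha
  · simp only [emb, Subtype.mk.injEq, Prod.mk.injEq] at h
    obtain ⟨rfl, rfl⟩ := h
    rfl

theorem emb_range (U : Finset α) (p : OP α) (hp : p.1.1 ∈ U ↔ p.1.2 ∈ U) : p ∈ Set.range (emb U) := by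
  obtain ⟨⟨x, y⟩, hxy⟩ := p
  simp only at hp hxy
  by_cases hx : x ∈ U
  · exact ⟨Sum.inl ⟨(⟨x, hx⟩, ⟨y, hp.1 hx⟩), by simpa using hxy⟩, rfl⟩
  · exact ⟨Sum.inr ⟨(⟨x, hx⟩, ⟨y, fun h => hx (hp.2 h)⟩), by simpa using hxy⟩, rfl⟩

theorem sw_emb_inl (U : Finset α) (p : OP {x // x ∈ U}) :
    sw (emb U (Sum.inl p)) = Equiv.Perm.subtypeCongrHom (fun x => x ∈ U) (sw p, 1) := by
  ext x
  simp only [sw, emb, Equiv.Perm.subtypeCongrHom, MonoidHom.coe_mk, OneHom.coe_mk]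
  by_cases hx : x ∈ U
  · rw [Equiv.Perm.subtypeCongr.left_apply _ _ hx]
    simp only [Equiv.swap_apply_def, Subtype.ext_iff]
    split_ifs <;> rfl
  · rw [Equiv.Perm.subtypeCongr.right_apply _ _ hx]
    rw [Equiv.swap_apply_of_ne_of_ne]
    · rfl
    · rintro rfl; exact hx p.1.1.2
    · rintro rfl; exact hx p.1.2.2

theorem sw_emb_inr (U : Finset α) (p : OP {x // ¬ x ∈ U}) :
    sw (emb U (Sum.inr p)) = Equiv.Perm.subtypeCongrHom (fun x => x ∈ U) (1, sw p) := by
  ext x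
  simp only [sw, emb, Equiv.Perm.subtypeCongrHom, MonoidHom.coe_mk, OneHom.coe_mk]
  by_cases hx : x ∈ U
  · rw [Equiv.Perm.subtypeCongr.left_apply _ _ hx]
    rw [Equiv.swap_apply_of_ne_of_ne]
    · rfl
    · rintro rfl; exact p.1.1.2 hx
    · rintro rfl; exact p.1.2.2 hx
  · rw [Equiv.Perm.subtypeCongr.right_apply _ _ hx]
    simp only [Equiv.swap_apply_def, Subtype.ext_iff]
    split_ifs <;> rfl

theorem prd_emb (U : Finset α) (l : List (OP {x // x ∈ U} ⊕ OP {x // ¬ x ∈ U})) :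
    prd (l.map (emb U)) = Equiv.Perm.subtypeCongrHom (fun x => x ∈ U) (prd (lefts l), prd (rights l)) := by
  induction l with
  | nil => 
    simp only [prd, lefts, rights, List.map_nil, List.prod_nil]
    exact (map_one _).symm
  | cons b l ih =>
    have h : prd ((b :: l).map (emb U)) = sw (emb U b) * prd (l.map (emb U)) := by
      simp [prd]
    rw [h, ih]
    rcases b with p | p
    · rw [sw_emb_inl, ← map_mul]
      simp [prd, lefts, rights]
    · rw [sw_emb_inr, ← map_mul]
      simp [prd, lefts, rights]

theorem indN_emb (U : Finset α) (l : List (OP {x // x ∈ U} ⊕ OP {x // ¬ x ∈ U})) :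
    indN (l.map (emb U)) = indN (lefts l) * indN (rights l) := by
  have : prd (l.map (emb U)) = 1 ↔ (prd (lefts l) = 1 ∧ prd (rights l) = 1) := by
    rw [prd_emb, map_eq_one_iff _ (Equiv.Perm.subtypeCongrHom_injective _)]
    simp [Prod.ext_iff]
  simp only [indN, this]
  by_cases h1 : prd (lefts l) = 1 <;> by_cases h2 : prd (rights l) = 1 <;> simp [h1, h2]

theorem mem_lefts {A B : Type*} (l : List (A ⊕ B)) (a : A) : a ∈ lefts l ↔ Sum.inl a ∈ l := by
  induction l with
  | nil => simp [lefts]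
  | cons b l ih => rcases b with b | b <;> simp [lefts, ih]

theorem orb_emb {a : α} {U : Finset α} (ha : a ∈ U) (l : List (OP {x // x ∈ U} ⊕ OP {x // ¬ x ∈ U})) :
    Orb a U (l.map (emb U)) ↔ Tr (lefts l) := by
  have hinv : ∀ V : Finset α, Inv (l.map (emb U)) V → Inv (lefts l) (univ.filter (fun x => x.1 ∈ V)) := by
    intro V hV p hp
    rw [mem_lefts] at hp
    have := hV _ (List.mem_map_of_mem hp)
    simpa [emb] using this
  constructor
  · rintro ⟨-, h2, h3⟩ V ⟨v0, hv0⟩ hV x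
    -- complement trick: the set containing a
    have key : ∀ V : Finset {x // x ∈ U}, (⟨a, ha⟩ : {x // x ∈ U}) ∈ V → Inv (lefts l) V → ∀ x, x ∈ V := by
      intro V haV hV x
      have h4 := h3 (V.map (Function.Embedding.subtype _)) (by simpa using ⟨ha, haV⟩) (by
        intro p hp
        rw [List.mem_map] at hp
        obtain ⟨b, hb, rfl⟩ := hp
        rcases b with b | b
        · have := hV b ((mem_lefts _ _).2 hb)
          simpa [emb] using this
        · simp only [emb, mem_map, Function.Embedding.subtype_apply, Subtype.exists, exists_and_right,
            exists_eq_right]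
          constructor
          · rintro ⟨h, _⟩; exact absurd h b.1.1.2
          · rintro ⟨h, _⟩; exact absurd h b.1.2.2)
      have h5 := h4 x.2
      simpa using h5
    by_cases haV : (⟨a, ha⟩ : {x // x ∈ U}) ∈ V
    · exact key V haV hV x
    · have := key Vᶜ (by simpa using haV) (by
        intro p hp
        simp only [mem_compl]
        rw [hV p hp]) v0
      exact absurd hv0 (by simpa using this)
  · intro h
    refine ⟨ha, ?_, ?_⟩
    · intro p hp
      rw [List.mem_map] at hp
      obtain ⟨b, hb, rfl⟩ := hp
      rcases b with b | b
      · simp [emb, b.1.1.2, b.1.2.2]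
      · simp [emb, b.1.1.2, b.1.2.2]
    · intro V haV hV x hx
      have := h _ ⟨⟨a, ha⟩, by simpa using haV⟩ (hinv V hV) ⟨x, hx⟩
      simpa using this

theorem FF_orb {a : α} {U : Finset α} (ha : a ∈ U) :
    FF (1/2) (fun l : List (OP α) => indN l * indO a U l) = hh {x // x ∈ U} * tt {x // ¬ x ∈ U} := by
  rw [hh, tt, ← shuffle]
  ext k
  simp only [FF, PowerSeries.coeff_mk]
  congr 1
  rw [SS_emb _ (emb U) (emb_inj U)]
  · congr 1
    funext l
    rw [indN_emb, indO, orb_emb ha, indT]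
    ring
  · intro l hl p hp
    apply emb_range
    have : Orb a U l := by
      by_contra hc
      exact hl (by simp [indO, hc])
    exact this.2.1 p hp

theorem tt_eq (a : α) : tt α = ∑ U : Finset α with a ∈ U, hh {x // x ∈ U} * tt {x // ¬ x ∈ U} := by
  have h1 : tt α = ∑ U : Finset α, FF (1/2) (fun l : List (OP α) => indN l * indO a U l) := by
    ext k
    simp only [tt, FF, map_sum, PowerSeries.coeff_mk]
    rw [← sum_div, ← SS_sum]
    simp only [← mul_sum, sum_indO, mul_one]
  rw [h1, sum_filter]
  refine sum_congr rfl fun U _ => ?_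
  split_ifs with h
  · exact FF_orb h
  · have : (fun l : List (OP α) => indN l * indO a U l) = fun _ => 0 := by
      funext l
      rw [indO, if_neg (fun h' => h h'.1), mul_zero]
    rw [this]
    ext k
    simp [FF, SS_zero_fun]

theorem tt_hh_congr {α β : Type} [Fintype α] [Fintype β] (e : α ≃ β) : tt α = tt β ∧ hh α = hh β := by
  let E : OP α → OP β := fun p => ⟨(e p.1.1, e p.1.2), fun h => p.2 (e.injective h)⟩
  have hE : Function.Injective E := by
    rintro ⟨⟨a, b⟩, h⟩ ⟨⟨c, d⟩, h'⟩ hh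
    simpa [E] using hh
  have hE2 : Function.Surjective E := by
    rintro ⟨⟨a, b⟩, h⟩
    exact ⟨⟨(e.symm a, e.symm b), by simpa using h⟩, by simp [E]⟩
  have hprd : ∀ l : List (OP α), prd (l.map E) = e.permCongrHom (prd l) := by
    intro l
    induction l with
    | nil => exact (map_one e.permCongrHom).symm
    | cons p l ih =>
      have h1 : prd ((p :: l).map E) = sw (E p) * prd (l.map E) := by simp [prd]
      have h2 : prd (p :: l) = sw p * prd l := by simp [prd]
      rw [h1, h2, ih, map_mul]
      congr 1
      ext x
      simp only [sw, E, Equiv.permCongrHom_coe, Equiv.permCongr_apply, Equiv.swap_apply_def]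
      have : ∀ y, e.symm x = y ↔ x = e y := fun y => e.symm_apply_eq
      simp only [this]
      split_ifs <;> simp
  have hN : ∀ l : List (OP α), indN (l.map E) = indN l := by
    intro l
    simp only [indN, hprd, EmbeddingLike.map_eq_one_iff]
  have hT : ∀ l : List (OP α), indT (l.map E) = indT l := by
    intro l
    have : Tr (l.map E) ↔ Tr l := by
      constructor
      · intro h V ⟨v, hv⟩ hV x
        have := h (V.map e.toEmbedding) ⟨e v, by simpa using hv⟩ (by
          intro p hp
          rw [List.mem_map] at hp
          obtain ⟨q, hq, rfl⟩ := hp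
          simpa [E] using hV q hq) (e x)
        simpa using this
      · intro h V ⟨v, hv⟩ hV x
        have := h (V.map e.symm.toEmbedding) ⟨e.symm v, by simpa using hv⟩ (by
          intro p hp
          have := hV (E p) (List.mem_map_of_mem hp)
          simpa [E, Equiv.symm_apply_eq] using this) (e.symm x)
        simpa using this
    simp only [indT, this]
  have key : ∀ f : List (OP β) → ℚ, FF (1/2) f = FF (1/2) (fun l : List (OP α) => f (l.map E)) := by
    intro f
    ext k
    simp only [FF, PowerSeries.coeff_mk]
    rw [SS_emb _ E hE k f (fun _ _ a _ => hE2 a)]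
  constructor
  · rw [tt, tt, key]; simp only [hN]
  · rw [hh, hh, key]; simp only [hN, hT]

theorem tt_rec (d : ℕ) : (d : PowerSeries ℚ) * tt (Fin d) =
    ∑ j ∈ range (d + 1), (d.choose j : PowerSeries ℚ) * ((j : PowerSeries ℚ) * hh (Fin j) * tt (Fin (d - j))) := by
  have h1 : (d : PowerSeries ℚ) * tt (Fin d) = ∑ _a : Fin d, tt (Fin d) := by simp
  rw [h1]
  have h2 : ∀ a : Fin d, tt (Fin d) = ∑ U : Finset (Fin d) with a ∈ U, hh (Fin #U) * tt (Fin (d - #U)) := by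
    intro a
    rw [tt_eq a]
    refine sum_congr (by ext; simp) fun U _ => ?_
    congr 1
    · refine (tt_hh_congr (Fintype.equivFinOfCardEq ?_)).2
      simp
    · have hcard : Nat.card {x // ¬ x ∈ U} = d - #U := by
        rw [Nat.card_eq_fintype_card, Fintype.card_subtype_compl]; simp
      exact (@tt_hh_congr _ _ (_) (_) ((Finite.equivFin _).trans (finCongr hcard))).1
  rw [sum_congr rfl (fun a _ => h2 a)]
  simp only [sum_filter]
  rw [sum_comm]
  have h3 : ∀ U : Finset (Fin d), (∑ x : Fin d, if x ∈ U then hh (Fin #U) * tt (Fin (d - #U)) else 0) =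
      (#U : PowerSeries ℚ) * hh (Fin #U) * tt (Fin (d - #U)) := by
    intro U
    rw [← sum_filter]
    simp [mul_assoc]
  simp only [h3]
  have h4 := sum_powerset_apply_card (fun j => (j : PowerSeries ℚ) * hh (Fin j) * tt (Fin (d - j))) (x := (univ : Finset (Fin d)))
  rw [powerset_univ, card_univ, Fintype.card_fin] at h4
  rw [h4]
  simp only [nsmul_eq_mul]

end

end HurwitzToda

namespace HurwitzToda
open Finset

theorem sw_eq {α : Type} [Fintype α] [DecidableEq α] (p : OP α) : sw p = Equiv.swap p.1.1 p.1.2 := by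
  unfold sw; congr!

theorem sum_OP {α : Type} [Fintype α] [DecidableEq α] (g : α → α → ℚ) :
    ∑ p : OP α, g p.1.1 p.1.2 = ∑ s, ∑ t ∈ univ.erase s, g s t := by
  have h := Finset.sum_subtype (F := instFintypeOP α) (univ.filter (fun p : α × α => p.1 ≠ p.2)) (p := fun p : α × α => p.1 ≠ p.2)
    (by simp) (fun p => g p.1 p.2)
  rw [← h, sum_filter, Fintype.sum_prod_type]
  refine sum_congr rfl fun s _ => ?_
  rw [← sum_filter]
  refine sum_congr ?_ fun _ _ => rfl
  ext t; simp [eq_comm]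

theorem cnt_eq_SS {α : Type} [Fintype α] [DecidableEq α] (r : ℕ) (σ : Equiv.Perm α) :
    cnt r σ = SS (1/2) r (fun l : List (OP α) => if σ * prd l = 1 then 1 else 0) := by
  induction r generalizing σ with
  | zero => simp [cnt, SS, prd]
  | succ r ih =>
    simp only [cnt, SS, ih]
    rw [← sum_OP (fun s t => SS (1/2) r (fun l : List (OP α) => if σ * Equiv.swap s t * prd l = 1 then 1 else 0))]
    have : ∀ (a : OP α) l, prd (a :: l) = Equiv.swap a.1.1 a.1.2 * prd l := by
      intro a l; simp [prd, sw_eq]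
    simp only [this, mul_assoc]
    ring

theorem tt_tau (d : ℕ) : tt (Fin d) = (d.factorial : ℚ) • tau d := by
  ext r
  rw [PowerSeries.coeff_smul, tt, FF, tau, PowerSeries.coeff_mk, PowerSeries.coeff_mk, cnt_eq_SS, smul_eq_mul]
  have : (d.factorial : ℚ) ≠ 0 := by positivity
  have h : (fun l : List (OP (Fin d)) => if 1 * prd l = 1 then (1:ℚ) else 0) = indN := by
    funext l; simp only [one_mul, indN]; congr!
  rw [h]
  field_simp

theorem SS_swap {α : Type} [Fintype α] [DecidableEq α] (k : ℕ) (f : List (Equiv.Perm α) → ℚ)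
    (hf : ∀ l, f l ≠ 0 → ∀ σ ∈ l, σ.IsSwap) :
    SS (1/2) k (fun l : List (OP α) => f (l.map sw)) = SS 1 k f := by
  induction k generalizing f with
  | zero => rfl
  | succ k ih =>
    simp only [SS, List.map_cons]
    have h1 : ∀ a : OP α, SS (1/2) k (fun l : List (OP α) => f (sw a :: l.map sw)) = SS 1 k (fun l => f (sw a :: l)) := by
      intro a
      exact ih (fun l => f (sw a :: l)) (fun l hl σ hσ => hf _ hl σ (List.mem_cons_of_mem _ hσ))
    simp only [h1]
    rw [← Finset.sum_fiberwise univ (fun a : OP α => sw a), one_mul, mul_sum]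
    refine sum_congr rfl fun σ _ => ?_
    have h2 : ∀ a ∈ univ.filter (fun a : OP α => sw a = σ), SS 1 k (fun l => f (sw a :: l)) = SS 1 k (fun l => f (σ :: l)) := by
      intro a ha
      simp only [mem_filter] at ha
      rw [ha.2]
    rw [sum_congr rfl h2, sum_const]
    by_cases hσ : σ.IsSwap
    · obtain ⟨x, y, hxy, rfl⟩ := hσ
      have h3 : univ.filter (fun a : OP α => sw a = Equiv.swap x y) = {⟨(x, y), hxy⟩, ⟨(y, x), hxy.symm⟩} := by
        ext ⟨⟨a, b⟩, hab⟩
        simp only [mem_filter, mem_univ, true_and, sw_eq, mem_insert, mem_singleton, Subtype.mk.injEq, Prod.mk.injEq]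
        constructor
        · intro h
          have e1 := congrArg (fun s : Equiv.Perm α => s a) h
          have e2 := congrArg (fun s : Equiv.Perm α => s b) h
          simp only [Equiv.swap_apply_left, Equiv.swap_apply_right, Equiv.swap_apply_def] at e1 e2
          simp only at hab
          by_cases a1 : a = x
          · left; rw [if_pos a1] at e1; exact ⟨a1, e1⟩
          · rw [if_neg a1] at e1
            by_cases a2 : a = y
            · right; rw [if_pos a2] at e1; exact ⟨a2, e1⟩
            · rw [if_neg a2] at e1; exact absurd e1.symm hab
        · rintro (⟨rfl, rfl⟩ | ⟨rfl, rfl⟩)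
          · rfl
          · exact Equiv.swap_comm _ _
      have hne : (⟨(x, y), hxy⟩ : OP α) ∉ ({⟨(y, x), hxy.symm⟩} : Finset (OP α)) := by
        simp only [mem_singleton, Subtype.mk.injEq, Prod.mk.injEq]
        exact fun h => hxy h.1
      rw [h3, card_insert_of_notMem hne, card_singleton]
      norm_num
      ring
    · have : (fun l => f (σ :: l)) = fun _ => 0 := by
        funext l
        by_contra hl
        exact hσ (hf _ hl σ (by simp))
      rw [this, SS_zero_fun]
      simp

theorem SS_tuple {A : Type} [Fintype A] (k : ℕ) (f : List A → ℚ) :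
    SS 1 k f = ∑ τ : Fin k → A, f (List.ofFn τ) := by
  induction k generalizing f with
  | zero => simp [SS]
  | succ k ih =>
    simp only [SS, ih, one_mul]
    rw [← (Fin.consEquiv (fun _ : Fin (k+1) => A)).sum_comp, Fintype.sum_prod_type]
    refine sum_congr rfl fun a _ => sum_congr rfl fun τ _ => ?_
    simp [Fin.consEquiv, List.ofFn_succ]

theorem Tr_iff {α : Type} [Fintype α] (l : List (OP α)) :
    Tr l ↔ ∀ x y : α, ∃ σ ∈ Subgroup.closure {σ | σ ∈ l.map sw}, σ x = y := by
  classical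
  constructor
  · intro h x y
    have := h (univ.filter (fun y => ∃ σ ∈ Subgroup.closure {σ | σ ∈ l.map sw}, σ x = y))
      ⟨x, by simpa using ⟨1, one_mem _, rfl⟩⟩ (by
        intro p hp
        have hs : sw p ∈ Subgroup.closure {σ | σ ∈ l.map sw} :=
          Subgroup.subset_closure (List.mem_map_of_mem hp)
        simp only [mem_filter, mem_univ, true_and]
        constructor
        · rintro ⟨σ, h1, h2⟩
          exact ⟨sw p * σ, mul_mem hs h1, by simp [h2, sw_eq]⟩
        · rintro ⟨σ, h1, h2⟩
          exact ⟨sw p * σ, mul_mem hs h1, by simp [h2, sw_eq]⟩) y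
    simpa using this
  · rintro h V ⟨v, hv⟩ hV x
    obtain ⟨σ, hσ, rfl⟩ := h v x
    have key : ∀ w, w ∈ V ↔ σ w ∈ V := by
      induction hσ using Subgroup.closure_induction with
      | mem σ hs =>
        intro w
        simp only [Set.mem_ofPred_eq, List.mem_map] at hs
        obtain ⟨p, hp, rfl⟩ := hs
        have := hV p hp
        rw [sw_eq, Equiv.swap_apply_def]
        split_ifs with h1 h2
        · rw [h1, this]
        · rw [h2, this]
        · rfl
      | one => intro w; rfl
      | mul a b _ _ ha hb => intro w; rw [hb w, ha (b w)]; rfl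
      | inv a _ ha => intro w; rw [ha (a⁻¹ w)]; simp
    exact (key v).1 hv

theorem hh_coeff (d r : ℕ) : PowerSeries.coeff r (hh (Fin d)) = (hurwitzTupleCount d r : ℚ) / r.factorial := by
  classical
  rw [hh, FF, PowerSeries.coeff_mk]
  congr 1
  let f : List (Equiv.Perm (Fin d)) → ℚ := fun l => if (∀ σ ∈ l, σ.IsSwap) ∧ l.prod = 1 ∧
    ∀ x y : Fin d, ∃ σ ∈ Subgroup.closure {σ | σ ∈ l}, σ x = y then 1 else 0
  have h1 : (fun l : List (OP (Fin d)) => indN l * indT l) = fun l => f (l.map sw) := by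
    funext l
    have hsw : ∀ σ ∈ l.map sw, σ.IsSwap := by
      intro σ hσ
      rw [List.mem_map] at hσ
      obtain ⟨p, _, rfl⟩ := hσ
      exact ⟨_, _, p.2, sw_eq p⟩
    simp only [f, indN, indT, Tr_iff]
    rw [prd]
    by_cases a : (l.map sw).prod = 1 <;>
      by_cases b : ∀ x y : Fin d, ∃ σ ∈ Subgroup.closure {σ | σ ∈ l.map sw}, σ x = y
    · rw [if_pos a, if_pos b, if_pos ⟨hsw, a, b⟩, mul_one]
    · rw [if_pos a, if_neg b, if_neg (fun h => b h.2.2), mul_zero]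
    · rw [if_neg a, zero_mul]; exact (if_neg (fun h => a h.2.1)).symm
    · rw [if_neg a, zero_mul]; exact (if_neg (fun h => a h.2.1)).symm
  rw [h1, SS_swap r f (by
    intro l hl
    by_contra hc
    exact hl (if_neg (fun h => hc h.1))), SS_tuple]
  simp only [f]
  rw [Finset.sum_boole, hurwitzTupleCount, Nat.card_eq_fintype_card, Fintype.card_subtype]
  congr 2
  ext τ
  have : {σ | σ ∈ List.ofFn τ} = Set.range τ := by
    ext σ; simp [List.mem_ofFn']
  simp only [this, mem_filter, mem_univ, true_and, List.forall_mem_ofFn_iff]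

theorem odd_zero (d r : ℕ) (hr : Odd r) : hurwitzTupleCount d r = 0 := by
  rw [hurwitzTupleCount]
  have : IsEmpty {τ : Fin r → Equiv.Perm (Fin d) //
    (∀ i, (τ i).IsSwap) ∧ (List.ofFn τ).prod = 1 ∧
    ∀ x y : Fin d, ∃ σ ∈ Subgroup.closure (Set.range τ), σ x = y} := by
    constructor
    rintro ⟨τ, h1, h2, -⟩
    have h3 := congrArg Equiv.Perm.sign h2
    rw [map_list_prod, List.map_ofFn, List.prod_ofFn] at h3
    have h4 : ∀ i, (Equiv.Perm.sign ∘ τ) i = -1 := fun i => (h1 i).sign_eq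
    simp only [h4, prod_const, card_univ, Fintype.card_fin, hr.neg_one_pow, map_one] at h3
    exact absurd h3 (by decide)
  exact Nat.card_of_isEmpty

/-- connected series -/
noncomputable def hd (d : ℕ) : PowerSeries ℚ := (1 / d.factorial : ℚ) • hh (Fin d)

theorem hd_coeff (d r : ℕ) : PowerSeries.coeff r (hd d) = (hurwitzTupleCount d r : ℚ) / d.factorial / r.factorial := by
  rw [hd, PowerSeries.coeff_smul, hh_coeff, smul_eq_mul]
  ring

noncomputable def HS : PowerSeries (PowerSeries ℚ) := PowerSeries.mk hd

theorem DD_tauS : DD tauS = tauS * DD HS := by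
  ext d : 1
  rw [coeff_DD, PowerSeries.coeff_mul]
  simp only [coeff_DD, tauS, HS, PowerSeries.coeff_mk]
  have h := tt_rec d
  rw [tt_tau, ← Finset.Nat.sum_antidiagonal_eq_sum_range_succ (fun j k => (d.choose j : PowerSeries ℚ) * ((j : PowerSeries ℚ) * hh (Fin j) * tt (Fin k)))] at h
  have hd0 : (d.factorial : ℚ) ≠ 0 := by positivity
  have h2 : (d : PowerSeries ℚ) * tau d = (1 / d.factorial : ℚ) • ((d : PowerSeries ℚ) * ((d.factorial : ℚ) • tau d)) := by
    rw [mul_smul_comm, smul_smul, one_div_mul_cancel hd0, one_smul]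
  rw [h2, h, smul_sum, ← Finset.Nat.sum_antidiagonal_swap]
  refine sum_congr rfl fun p hp => ?_
  rw [Finset.HasAntidiagonal.mem_antidiagonal] at hp
  obtain ⟨j, k⟩ := p
  simp only [Prod.fst_swap, Prod.snd_swap] at hp ⊢
  subst hp
  rw [tt_tau, hd]
  have hc : ((j + k).choose k : ℚ) * j.factorial * k.factorial = (j + k).factorial := by
    have := Nat.add_choose_mul_factorial_mul_factorial j k
    exact_mod_cast this
  have e : (((j + k).choose k : ℕ) : PowerSeries ℚ) = PowerSeries.C (((j+k).choose k : ℕ) : ℚ) := by simp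
  rw [e]
  simp only [PowerSeries.smul_eq_C_mul]
  have hC : PowerSeries.C (1 / ((j+k).factorial : ℚ)) * PowerSeries.C (((j+k).choose k : ℕ) : ℚ) * PowerSeries.C (j.factorial : ℚ)
     = PowerSeries.C (1 / (k.factorial : ℚ)) := by
    rw [← map_mul, ← map_mul]
    congr 1
    have : (j.factorial : ℚ) ≠ 0 := by positivity
    have : (k.factorial : ℚ) ≠ 0 := by positivity
    have : ((j+k).factorial : ℚ) ≠ 0 := by positivity
    field_simp
    linarith
  rw [← hC]
  ring

end HurwitzToda

namespace HurwitzToda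
open Finset

noncomputable def theta (k : ℕ) : PowerSeries ℚ := ex k + ex (-k) - 2

theorem tauE_eq (c : ℚ) : tauE c = PowerSeries.rescale (ex c) tauS := by
  ext d : 1
  rw [PowerSeries.coeff_rescale, tauE, tauS, PowerSeries.coeff_mk, PowerSeries.coeff_mk]
  congr 1
  induction d with
  | zero => simp [ex_zero]
  | succ d ih => rw [pow_succ, ← ih, ← ex_add]; congr 1; push_cast; ring

theorem ex_pow (c : ℚ) (d : ℕ) : ex c ^ d = ex (c * d) := by
  induction d with
  | zero => simp [ex_zero]
  | succ d ih => rw [pow_succ, ih, ← ex_add]; congr 1; push_cast; ring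

theorem DD_rescale {A : Type*} [CommRing A] (a : A) (f : PowerSeries A) :
    DD (PowerSeries.rescale a f) = PowerSeries.rescale a (DD f) := by
  ext n
  rw [coeff_DD, PowerSeries.coeff_rescale, PowerSeries.coeff_rescale, coeff_DD]
  ring

theorem exists_E : ∃ E M : PowerSeries (PowerSeries ℚ), PowerSeries.coeff 0 E = 1 ∧
    PowerSeries.X * E = DD (DD HS) ∧ DD E = E * M ∧
    ∀ k, PowerSeries.coeff k M = theta k * ((k : PowerSeries ℚ) * hd k) := by
  have h0 : PowerSeries.constantCoeff tauS = 1 := by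
    rw [← PowerSeries.coeff_zero_eq_constantCoeff_apply, tauS, PowerSeries.coeff_mk, tau_zero]
  have hu : IsUnit tauS := by
    rw [PowerSeries.isUnit_iff_constantCoeff, h0]; exact isUnit_one
  obtain ⟨W, hW⟩ := hu.exists_right_inv
  have hW0 : PowerSeries.constantCoeff W = 1 := by
    have := congrArg PowerSeries.constantCoeff hW
    rwa [map_mul, h0, one_mul, map_one] at this
  have hE0 : ∀ c, PowerSeries.constantCoeff (tauE c) = 1 := by
    intro c
    rw [← PowerSeries.coeff_zero_eq_constantCoeff_apply, tauE, PowerSeries.coeff_mk, tau_zero]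
    simp [ex_zero]
  have hD : ∀ c, DD (tauE c) = tauE c * PowerSeries.rescale (ex c) (DD HS) := by
    intro c
    rw [tauE_eq, DD_rescale, DD_tauS, map_mul]
  have ht := toda
  refine ⟨tauE 1 * tauE (-1) * W ^ 2, PowerSeries.rescale (ex 1) (DD HS) + PowerSeries.rescale (ex (-1)) (DD HS) - 2 * DD HS, ?_, ?_, ?_, ?_⟩
  · rw [PowerSeries.coeff_zero_eq_constantCoeff_apply]
    simp [hE0, hW0]
  · have h2 : tauS * DD (DD tauS) - DD tauS ^ 2 = tauS ^ 2 * DD (DD HS) := by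
      rw [DD_tauS, DD_mul, DD_tauS]; ring
    rw [h2] at ht
    linear_combination W ^ 2 * ht + (DD (DD HS)) * (tauS * W + 1) * hW
  · have hDW : DD W = - W * DD HS := by
      have := congrArg DD hW
      rw [DD_mul, DD_one, DD_tauS] at this
      linear_combination W * this - (DD W + W * DD HS) * hW
    rw [DD_mul, DD_mul, hD, hD, sq, DD_mul, hDW]
    ring
  · intro k
    have h2 : (2 : PowerSeries (PowerSeries ℚ)) = PowerSeries.C 2 := (map_ofNat _ 2).symm
    rw [map_sub, map_add, PowerSeries.coeff_rescale, PowerSeries.coeff_rescale, h2, PowerSeries.coeff_C_mul, coeff_DD,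
      ex_pow, ex_pow, HS, PowerSeries.coeff_mk, theta]
    simp only [one_mul, neg_mul]
    ring

noncomputable def phi (k : ℕ) : PowerSeries ℚ := PowerSeries.mk (fun r => PowerSeries.coeff (r + 2) (theta k))

theorem theta_eq (k : ℕ) : theta k = PowerSeries.X ^ 2 * phi k := by
  have h2 : (2 : PowerSeries ℚ) = PowerSeries.C 2 := (map_ofNat _ 2).symm
  ext r
  match r with
  | 0 =>
    rw [PowerSeries.coeff_X_pow_mul', theta, map_sub, map_add, coeff_ex, coeff_ex, h2, PowerSeries.coeff_C]
    norm_num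
  | 1 =>
    rw [PowerSeries.coeff_X_pow_mul', theta, map_sub, map_add, coeff_ex, coeff_ex, h2, PowerSeries.coeff_C]
    norm_num
  | r + 2 => rw [PowerSeries.coeff_X_pow_mul, phi, PowerSeries.coeff_mk]

theorem phi_coeff (k r : ℕ) : PowerSeries.coeff r (phi k) = ((k : ℚ) ^ (r + 2) + (-k : ℚ) ^ (r + 2)) / (r + 2).factorial := by
  have h2 : (2 : PowerSeries ℚ) = PowerSeries.C 2 := (map_ofNat _ 2).symm
  rw [phi, PowerSeries.coeff_mk, theta, map_sub, map_add, coeff_ex, coeff_ex, h2, PowerSeries.coeff_C]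
  simp
  ring

/-- the scaled series -/
theorem exists_hat : ∃ e h : ℕ → PowerSeries ℚ, h 0 = 0 ∧ e 0 = 1 ∧
    (∀ d, 1 ≤ d → hd d = PowerSeries.X ^ (2 * d - 2) * h d) ∧
    (∀ n, e n = ((n + 1 : ℕ) : PowerSeries ℚ) ^ 2 * h (n + 1)) ∧
    (∀ n : ℕ, (n : PowerSeries ℚ) * e n = ∑ p ∈ HasAntidiagonal.antidiagonal n, e p.1 * ((p.2 : PowerSeries ℚ) * (phi p.2 * h p.2))) := by
  obtain ⟨E, M, hE0, hXE, hDE, hM⟩ := exists_E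
  set ee : ℕ → PowerSeries ℚ := fun n => PowerSeries.coeff n E with hee
  have e1 : ∀ n, ee n = ((n + 1 : ℕ) : PowerSeries ℚ) ^ 2 * hd (n + 1) := by
    intro n
    have := congrArg (PowerSeries.coeff (n + 1)) hXE
    rw [PowerSeries.coeff_succ_X_mul, coeff_DD, coeff_DD, HS, PowerSeries.coeff_mk] at this
    rw [hee]; simp only; rw [this]; ring
  have e2 : ∀ n : ℕ, (n : PowerSeries ℚ) * ee n = ∑ p ∈ HasAntidiagonal.antidiagonal n, ee p.1 * (theta p.2 * (p.2 * hd p.2)) := by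
    intro n
    have := congrArg (PowerSeries.coeff n) hDE
    rw [coeff_DD, PowerSeries.coeff_mul] at this
    simpa only [hM] using this
  have inv : ∀ n : ℕ, n ≠ 0 → PowerSeries.C (1 / n : ℚ) * (n : PowerSeries ℚ) = 1 := by
    intro n hn
    have : (n : PowerSeries ℚ) = PowerSeries.C (n : ℚ) := by simp
    rw [this, ← map_mul, one_div_mul_cancel (by exact_mod_cast hn), map_one]
  have e3 : ∀ n, hd (n + 1) = PowerSeries.C (1 / (n + 1 : ℕ) : ℚ) ^ 2 * ee n := by
    intro n
    rw [e1, ← mul_assoc, ← mul_pow, inv _ (by omega), one_pow, one_mul]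
  have dv : ∀ n, PowerSeries.X ^ (2 * n) ∣ ee n := by
    intro n
    induction n using Nat.strong_induction_on with
    | _ n ih =>
      rcases Nat.eq_zero_or_pos n with rfl | hn
      · simp
      · have : ee n = PowerSeries.C (1 / n : ℚ) * ((n : PowerSeries ℚ) * ee n) := by
          rw [← mul_assoc, inv n (by omega), one_mul]
        rw [this, e2]
        apply Dvd.dvd.mul_left
        apply dvd_sum
        rintro ⟨i, j⟩ hij
        rw [Finset.HasAntidiagonal.mem_antidiagonal] at hij
        simp only at hij ⊢
        rcases j with _ | j
        · simp
        · have a := ih i (by omega)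
          have b : PowerSeries.X ^ (2 * j) ∣ hd (j + 1) := by
            rw [e3]; exact (ih j (by omega)).mul_left _
          have c : PowerSeries.X ^ 2 ∣ theta (j + 1) := by rw [theta_eq]; exact dvd_mul_right _ _
          have : 2 * n = 2 * i + (2 + 2 * j) := by omega
          rw [this, pow_add, pow_add]
          exact mul_dvd_mul a (mul_dvd_mul c (b.mul_left _))
  choose e he using dv
  let h : ℕ → PowerSeries ℚ := fun d => match d with
    | 0 => 0
    | n + 1 => PowerSeries.C (1 / (n + 1 : ℕ) : ℚ) ^ 2 * e n
  have hhd : ∀ n, hd (n + 1) = PowerSeries.X ^ (2 * n) * h (n + 1) := by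
    intro n
    rw [e3, he]; simp only [h]; ring
  refine ⟨e, h, rfl, ?_, ?_, ?_, ?_⟩
  · have := he 0
    rw [hee] at this; simp only at this; rw [hE0] at this
    simpa using this.symm
  · intro d hd
    obtain ⟨n, rfl⟩ : ∃ n, d = n + 1 := ⟨d - 1, by omega⟩
    rw [hhd]; congr 2
  · intro n
    simp only [h]
    rw [← mul_assoc, ← mul_pow, mul_comm (((n + 1 : ℕ)) : PowerSeries ℚ), inv _ (by omega), one_pow, one_mul]
  · intro n
    apply mul_left_cancel₀ (pow_ne_zero (2 * n) (PowerSeries.X_ne_zero (R := ℚ)))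
    have := e2 n
    rw [he] at this
    rw [mul_left_comm, this, mul_sum]
    refine sum_congr rfl ?_
    rintro ⟨i, j⟩ hij
    rw [Finset.HasAntidiagonal.mem_antidiagonal] at hij
    simp only at hij ⊢
    rcases j with _ | j
    · simp
    · have : 2 * n = 2 * i + (2 + 2 * j) := by omega
      rw [this, pow_add, pow_add, hhd, he, theta_eq]
      ring

end HurwitzToda

namespace HurwitzToda
open Finset

theorem ev_zero (f g : PowerSeries ℚ) : PowerSeries.coeff 0 (f * g) = PowerSeries.coeff 0 f * PowerSeries.coeff 0 g := by
  simp [PowerSeries.coeff_mul]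

theorem ev_two (f g : PowerSeries ℚ) (hf : PowerSeries.coeff 1 f = 0) :
    PowerSeries.coeff 2 (f * g) = PowerSeries.coeff 0 f * PowerSeries.coeff 2 g
      + PowerSeries.coeff 2 f * PowerSeries.coeff 0 g := by
  rw [PowerSeries.coeff_mul]
  simp only [Finset.Nat.antidiagonal_succ, Finset.Nat.antidiagonal_zero, sum_cons, sum_map, map_singleton, sum_singleton,
    Finset.map_cons, Function.Embedding.prodMap, Function.Embedding.coeFn_mk, Prod.map]
  simp [hf]

theorem ev_four (f g : PowerSeries ℚ) (hf : PowerSeries.coeff 1 f = 0) (hf3 : PowerSeries.coeff 3 f = 0) :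
    PowerSeries.coeff 4 (f * g) = PowerSeries.coeff 0 f * PowerSeries.coeff 4 g
      + PowerSeries.coeff 2 f * PowerSeries.coeff 2 g + PowerSeries.coeff 4 f * PowerSeries.coeff 0 g := by
  rw [PowerSeries.coeff_mul]
  simp only [Finset.Nat.antidiagonal_succ, Finset.Nat.antidiagonal_zero, sum_cons, sum_map, map_singleton, sum_singleton,
    Finset.map_cons, Function.Embedding.prodMap, Function.Embedding.coeFn_mk, Prod.map]
  simp [hf, hf3]
  ring

theorem natC (k : ℕ) : (k : PowerSeries ℚ) = PowerSeries.C (k : ℚ) := by simp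

/-- coefficient extraction -/
noncomputable def ev (k : ℕ) (f : ℕ → PowerSeries ℚ) : PowerSeries ℚ := PowerSeries.mk (fun n => PowerSeries.coeff k (f n))

theorem Xe (k : ℕ) (e h : ℕ → PowerSeries ℚ) (h1 : ∀ n, e n = ((n + 1 : ℕ) : PowerSeries ℚ) ^ 2 * h (n + 1)) :
    PowerSeries.X * ev k e = DD (DD (ev k h)) := by
  ext n
  rcases n with _ | n
  · simp [coeff_DD]
  · rw [PowerSeries.coeff_succ_X_mul, coeff_DD, coeff_DD, ev, ev, PowerSeries.coeff_mk, PowerSeries.coeff_mk, h1, natC,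
      ← map_pow, PowerSeries.coeff_C_mul]
    ring

theorem system : ∃ A B C E0 E1 E2 : PowerSeries ℚ,
    (∀ d, 1 ≤ d → PowerSeries.coeff d A = hurwitzNumber 0 d / (2 * d - 2).factorial) ∧
    (∀ d, 1 ≤ d → PowerSeries.coeff d B = hurwitzNumber 1 d / (2 * d).factorial) ∧
    (∀ d, 1 ≤ d → PowerSeries.coeff d C = hurwitzNumber 2 d / (2 * d + 2).factorial) ∧
    PowerSeries.coeff 0 A = 0 ∧ PowerSeries.coeff 0 B = 0 ∧ PowerSeries.coeff 0 C = 0 ∧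
    PowerSeries.coeff 0 E0 = 1 ∧ PowerSeries.coeff 0 E1 = 0 ∧ PowerSeries.coeff 0 E2 = 0 ∧
    PowerSeries.X * E0 = DD (DD A) ∧ PowerSeries.X * E1 = DD (DD B) ∧ PowerSeries.X * E2 = DD (DD C) ∧
    DD E0 = E0 * DD (DD (DD A)) ∧
    DD E1 = E0 * DD (DD (DD B) + PowerSeries.C (1/12) * DD (DD (DD (DD A)))) + E1 * DD (DD (DD A)) ∧
    DD E2 = E0 * DD (DD (DD C) + PowerSeries.C (1/12) * DD (DD (DD (DD B))) +
        PowerSeries.C (1/360) * DD (DD (DD (DD (DD (DD A)))))) +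
      E1 * DD (DD (DD B) + PowerSeries.C (1/12) * DD (DD (DD (DD A)))) + E2 * DD (DD (DD A)) := by
  obtain ⟨e, h, h0, e0, hhd, he, hrec⟩ := exists_hat
  have hco : ∀ d r, 1 ≤ d → PowerSeries.coeff r (h d) =
      (hurwitzTupleCount d (r + (2 * d - 2)) : ℚ) / d.factorial / (r + (2 * d - 2)).factorial := by
    intro d r hd1
    rw [← hd_coeff, hhd d hd1, PowerSeries.coeff_X_pow_mul]
  have hodd : ∀ d r, Odd r → PowerSeries.coeff r (h d) = 0 := by
    intro d r hr
    rcases Nat.eq_zero_or_pos d with rfl | hd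
    · simp [h0]
    · rw [hco d r hd, odd_zero]
      · simp
      · obtain ⟨m, rfl⟩ := hr
        exact ⟨m + (d - 1), by omega⟩
  have eodd : ∀ d r, Odd r → PowerSeries.coeff r (e d) = 0 := by
    intro d r hr
    rw [he, natC, ← map_pow, PowerSeries.coeff_C_mul, hodd _ _ hr, mul_zero]
  have p1 : ∀ k, PowerSeries.coeff 1 (phi k) = 0 := by
    intro k; rw [phi_coeff]; ring
  have p3 : ∀ k, PowerSeries.coeff 3 (phi k) = 0 := by
    intro k; rw [phi_coeff]; ring
  have p0 : ∀ k : ℕ, PowerSeries.coeff 0 (phi k) = (k : ℚ) ^ 2 := by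
    intro k; rw [phi_coeff]; norm_num [Nat.factorial]
  have p2 : ∀ k : ℕ, PowerSeries.coeff 2 (phi k) = (k : ℚ) ^ 4 / 12 := by
    intro k; rw [phi_coeff]; norm_num [Nat.factorial]; ring
  have p4 : ∀ k : ℕ, PowerSeries.coeff 4 (phi k) = (k : ℚ) ^ 6 / 360 := by
    intro k; rw [phi_coeff]; norm_num [Nat.factorial]; ring
  have c0 : ∀ k : ℕ, PowerSeries.coeff 0 ((k : PowerSeries ℚ) * (phi k * h k)) = k * (k ^ 2 * PowerSeries.coeff 0 (h k)) := by
    intro k; rw [natC, PowerSeries.coeff_C_mul, ev_zero, p0]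
  have c2 : ∀ k : ℕ, PowerSeries.coeff 2 ((k : PowerSeries ℚ) * (phi k * h k)) = k * (k ^ 2 * PowerSeries.coeff 2 (h k) + k ^ 4 / 12 * PowerSeries.coeff 0 (h k)) := by
    intro k; rw [natC, PowerSeries.coeff_C_mul, ev_two _ _ (p1 k), p0, p2]
  have c4 : ∀ k : ℕ, PowerSeries.coeff 4 ((k : PowerSeries ℚ) * (phi k * h k)) = k * (k ^ 2 * PowerSeries.coeff 4 (h k) + k ^ 4 / 12 * PowerSeries.coeff 2 (h k) + k ^ 6 / 360 * PowerSeries.coeff 0 (h k)) := by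
    intro k; rw [natC, PowerSeries.coeff_C_mul, ev_four _ _ (p1 k) (p3 k), p0, p2, p4]
  refine ⟨ev 0 h, ev 2 h, ev 4 h, ev 0 e, ev 2 e, ev 4 e, ?_, ?_, ?_, ?_, ?_, ?_, ?_, ?_, ?_, Xe _ _ _ he, Xe _ _ _ he, Xe _ _ _ he, ?_, ?_, ?_⟩
  · intro d hd
    rw [ev, PowerSeries.coeff_mk, hco d _ hd, hurwitzNumber]
    have : 0 + (2 * d - 2) = 2 * d - 2 := by omega
    have : 2 * 0 + 2 * d - 2 = 2 * d - 2 := by omega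
    simp only [*]
  · intro d hd
    rw [ev, PowerSeries.coeff_mk, hco d _ hd, hurwitzNumber]
    have : 2 + (2 * d - 2) = 2 * d := by omega
    have : 2 * 1 + 2 * d - 2 = 2 * d := by omega
    simp only [*]
  · intro d hd
    rw [ev, PowerSeries.coeff_mk, hco d _ hd, hurwitzNumber]
    have : 4 + (2 * d - 2) = 2 * d + 2 := by omega
    have : 2 * 2 + 2 * d - 2 = 2 * d + 2 := by omega
    simp only [*]
  · rw [ev, PowerSeries.coeff_mk, h0, map_zero]
  · rw [ev, PowerSeries.coeff_mk, h0, map_zero]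
  · rw [ev, PowerSeries.coeff_mk, h0, map_zero]
  · rw [ev, PowerSeries.coeff_mk, e0]; simp
  · rw [ev, PowerSeries.coeff_mk, e0]; simp [PowerSeries.coeff_one]
  · rw [ev, PowerSeries.coeff_mk, e0]; simp [PowerSeries.coeff_one]
  · ext n
    have := congrArg (PowerSeries.coeff 0) (hrec n)
    rw [natC, PowerSeries.coeff_C_mul, map_sum] at this
    simp only [ev_zero, c0] at this
    rw [coeff_DD, PowerSeries.coeff_mul]
    simp only [coeff_DD, ev, PowerSeries.coeff_mk]
    rw [this]
    refine sum_congr rfl fun p _ => ?_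
    ring
  · ext n
    have := congrArg (PowerSeries.coeff 2) (hrec n)
    rw [natC, PowerSeries.coeff_C_mul, map_sum] at this
    simp only [ev_two _ _ (eodd _ 1 odd_one), c0, c2] at this
    rw [coeff_DD, map_add, PowerSeries.coeff_mul, PowerSeries.coeff_mul]
    simp only [coeff_DD, map_add, PowerSeries.coeff_C_mul, ev, PowerSeries.coeff_mk]
    rw [this, ← sum_add_distrib]
    refine sum_congr rfl fun p _ => ?_
    ring
  · ext n
    have := congrArg (PowerSeries.coeff 4) (hrec n)
    rw [natC, PowerSeries.coeff_C_mul, map_sum] at this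
    simp only [ev_four _ _ (eodd _ 1 odd_one) (eodd _ 3 (by decide)), c0, c2, c4] at this
    rw [coeff_DD, map_add, map_add, PowerSeries.coeff_mul, PowerSeries.coeff_mul, PowerSeries.coeff_mul]
    simp only [coeff_DD, map_add, PowerSeries.coeff_C_mul, ev, PowerSeries.coeff_mk]
    rw [this, ← sum_add_distrib, ← sum_add_distrib]
    refine sum_congr rfl fun p _ => ?_
    ring

end HurwitzToda

namespace HurwitzToda
open Finset

theorem DD_inj (f g : PowerSeries ℚ) (h : DD f = DD g) (h0 : PowerSeries.coeff 0 f = PowerSeries.coeff 0 g) : f = g := by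
  ext n
  rcases Nat.eq_zero_or_pos n with rfl | hn
  · exact h0
  · have := congrArg (PowerSeries.coeff n) h
    rw [coeff_DD, coeff_DD] at this
    exact mul_left_cancel₀ (by exact_mod_cast (by omega : n ≠ 0)) this

theorem DD_coeff_zero (f : PowerSeries ℚ) : PowerSeries.coeff 0 (DD f) = 0 := by
  rw [coeff_DD]; simp

theorem DD_uniq (F G : PowerSeries ℚ) (h : DD F = F * G) (hG : PowerSeries.coeff 0 G = 0)
    (hF : PowerSeries.coeff 0 F = 0) : F = 0 := by
  ext n
  induction n using Nat.strong_induction_on with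
  | _ n ih =>
    rcases Nat.eq_zero_or_pos n with rfl | hn
    · simpa using hF
    · have := congrArg (PowerSeries.coeff n) h
      rw [coeff_DD, PowerSeries.coeff_mul, sum_eq_zero] at this
      · rw [map_zero]
        exact (mul_eq_zero.1 this).resolve_left (by exact_mod_cast (by omega : n ≠ 0))
      · rintro ⟨i, j⟩ hij
        rw [Finset.HasAntidiagonal.mem_antidiagonal] at hij
        simp only at hij ⊢
        rcases Nat.eq_zero_or_pos j with rfl | hj
        · rw [hG, mul_zero]
        · rw [ih i (by omega), map_zero, zero_mul]

theorem DD_ofNat (n : ℕ) [n.AtLeastTwo] (f : PowerSeries ℚ) :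
    DD ((no_index (OfNat.ofNat n : PowerSeries ℚ)) * f) = (OfNat.ofNat n : PowerSeries ℚ) * DD f :=
  DD_natCast_mul (A := ℚ) n f

theorem DD_pow (f : PowerSeries ℚ) (n : ℕ) : DD (f ^ (n + 1)) = ((n + 1 : ℕ) : PowerSeries ℚ) * f ^ n * DD f := by
  induction n with
  | zero => simp
  | succ n ih => rw [pow_succ, DD_mul, ih]; push_cast; ring

theorem main_identity (A B C E0 E1 E2 : PowerSeries ℚ)
    (hA0 : PowerSeries.coeff 0 A = 0) (hB0 : PowerSeries.coeff 0 B = 0) (hC0 : PowerSeries.coeff 0 C = 0)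
    (hE0 : PowerSeries.coeff 0 E0 = 1) (hE1 : PowerSeries.coeff 0 E1 = 0) (hE2 : PowerSeries.coeff 0 E2 = 0)
    (x0 : PowerSeries.X * E0 = DD (DD A)) (x1 : PowerSeries.X * E1 = DD (DD B)) (x2 : PowerSeries.X * E2 = DD (DD C))
    (d0 : DD E0 = E0 * DD (DD (DD A)))
    (d1 : DD E1 = E0 * DD (DD (DD B) + PowerSeries.C (1/12) * DD (DD (DD (DD A)))) + E1 * DD (DD (DD A)))
    (d2 : DD E2 = E0 * DD (DD (DD C) + PowerSeries.C (1/12) * DD (DD (DD (DD B))) +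
        PowerSeries.C (1/360) * DD (DD (DD (DD (DD (DD A)))))) +
      E1 * DD (DD (DD B) + PowerSeries.C (1/12) * DD (DD (DD (DD A)))) + E2 * DD (DD (DD A))) :
    544 * DD (DD C) + 816 * DD C + 272 * C = 97 * DD (DD (DD B)) - 160 * DD (DD B) +
      1088 * DD (DD A * DD C) - 920 * (DD (DD A) * DD C) + 46788 * (DD (DD B) * DD (DD B)) -
      7798 * DD (DD (DD B * DD B)) := by
  have cc12 : (12 : PowerSeries ℚ) * PowerSeries.C (1/12) = 1 := by
    rw [← map_ofNat (PowerSeries.C (R := ℚ)) 12, ← map_mul]; norm_num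
  have cc360 : (360 : PowerSeries ℚ) * PowerSeries.C (1/360) = 1 := by
    rw [← map_ofNat (PowerSeries.C (R := ℚ)) 360, ← map_mul]; norm_num
  set T := DD (DD A) with hT
  set K1 := DD (DD B) + PowerSeries.C (1/12) * DD (DD T) with hK1
  set K2 := DD (DD C) + PowerSeries.C (1/12) * DD (DD (DD (DD B))) + PowerSeries.C (1/360) * DD (DD (DD (DD T))) with hK2
  have k1 : 12 * K1 = 12 * DD (DD B) + DD (DD T) := by
    rw [hK1]; linear_combination DD (DD T) * cc12
  have k2 : 360 * K2 = 360 * DD (DD C) + 30 * DD (DD (DD (DD B))) + DD (DD (DD (DD T))) := by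
    rw [hK2]; linear_combination DD (DD (DD (DD T))) * cc360 + 30 * DD (DD (DD (DD B))) * cc12
  have z1 : PowerSeries.coeff 0 K1 = 0 := by
    rw [hK1, map_add, PowerSeries.coeff_C_mul, DD_coeff_zero, DD_coeff_zero]; simp
  have z2 : PowerSeries.coeff 0 K2 = 0 := by
    rw [hK2, map_add, map_add, PowerSeries.coeff_C_mul, PowerSeries.coeff_C_mul, DD_coeff_zero, DD_coeff_zero, DD_coeff_zero]; simp
  have zT : PowerSeries.coeff 0 T = 0 := DD_coeff_zero _
  have y1 : E1 = K1 * E0 := by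
    rw [← sub_eq_zero]
    apply DD_uniq _ (DD T)
    · rw [DD_sub, DD_mul, d0, d1]; ring
    · exact DD_coeff_zero _
    · rw [map_sub, ev_zero, hE1, z1]; simp
  have y2 : 2 * E2 = (2 * K2 + K1 * K1) * E0 := by
    rw [← sub_eq_zero]
    apply DD_uniq _ (DD T)
    · rw [DD_sub, DD_ofNat, DD_mul, DD_add, DD_ofNat, DD_mul, d0, d2, y1]; ring
    · exact DD_coeff_zero _
    · rw [map_sub, ev_zero, ev_zero, map_add, ev_zero, ev_zero, hE2, z1, z2]; simp
  -- the basic series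
  have hX : DD (PowerSeries.X : PowerSeries ℚ) = PowerSeries.X := by simp [DD]
  have tD : (1 - T) * DD T = T := by
    have h := congrArg DD x0
    rw [DD_mul, hX, d0] at h
    linear_combination -h + (1 + DD T) * x0
  have hu : IsUnit (1 - T) := by
    rw [PowerSeries.isUnit_iff_constantCoeff, ← PowerSeries.coeff_zero_eq_constantCoeff_apply, map_sub, zT]
    simp
  obtain ⟨P, hP⟩ := hu.exists_right_inv
  have hTP : T * P = P - 1 := by linear_combination -hP
  have hP0 : PowerSeries.coeff 0 P = 1 := by
    have := congrArg (PowerSeries.coeff 0) hTP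
    rw [ev_zero, zT, map_sub] at this
    simp at this
    simp; linarith
  have t1 : DD T = P - 1 := by
    linear_combination P * tD - (DD T) * hP + hTP
  have pD : DD P = P ^ 2 * (P - 1) := by
    have h := congrArg DD hP
    rw [DD_mul, DD_sub, DD_one, t1] at h
    linear_combination P * h - DD P * hP
  have t2 : DD (DD T) = P ^ 2 * (P - 1) := by
    rw [t1, DD_sub, DD_one, pD, sub_zero]
  have t3 : DD (DD (DD T)) = (3 * P ^ 2 - 2 * P) * (P ^ 2 * (P - 1)) := by
    rw [t2, DD_mul, DD_sub, DD_pow, DD_one, pD]; push_cast; ring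
  have t4 : DD (DD (DD (DD T))) = 15 * P ^ 7 - 35 * P ^ 6 + 26 * P ^ 5 - 6 * P ^ 4 := by
    have : (3 * P ^ 2 - 2 * P) * (P ^ 2 * (P - 1)) = 3 * P ^ 5 - 5 * P ^ 4 + 2 * P ^ 3 := by ring
    rw [t3, this]
    simp only [DD_add, DD_sub, DD_ofNat, DD_pow, pD]; push_cast; ring
  have b2 : 12 * DD (DD B) = P ^ 2 * (P - 1) ^ 2 := by
    have h : DD (DD B) = T * K1 := by rw [← x1, y1, ← x0]; ring
    linear_combination 12 * P * h - 12 * DD (DD B) * hP + T * P * k1 + T * P * t2 + P ^ 2 * (P - 1) * hTP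
  have b1 : 24 * DD B = (P - 1) ^ 2 := by
    apply DD_inj
    · rw [DD_ofNat, DD_pow, DD_sub, DD_one, pD]
      push_cast
      linear_combination 2 * b2
    · rw [ev_zero, DD_coeff_zero, sq, ev_zero, map_sub, hP0]; simp
  have b3 : 12 * DD (DD (DD B)) = 4 * P ^ 6 - 10 * P ^ 5 + 8 * P ^ 4 - 2 * P ^ 3 := by
    have h := congrArg DD b2
    have e : P ^ 2 * (P - 1) ^ 2 = P ^ 4 - 2 * P ^ 3 + P ^ 2 := by ring
    rw [e] at h
    simp only [DD_add, DD_sub, DD_ofNat, DD_pow, pD] at h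
    rw [h]; push_cast; ring
  have b4 : 12 * DD (DD (DD (DD B))) = 24 * P ^ 8 - 74 * P ^ 7 + 82 * P ^ 6 - 38 * P ^ 5 + 6 * P ^ 4 := by
    have h := congrArg DD b3
    simp only [DD_add, DD_sub, DD_ofNat, DD_pow, pD] at h
    rw [h]; push_cast; ring
  have kk : 12 * K1 = P ^ 3 * (P - 1) := by linear_combination k1 + b2 + t2
  have kk2 : 144 * (K1 * K1) = (P ^ 3 * (P - 1)) ^ 2 := by rw [← kk]; ring
  have g2 : 1440 * DD (DD C) = 245 * P ^ 9 - 935 * P ^ 8 + 1375 * P ^ 7 - 961 * P ^ 6 + 312 * P ^ 5 - 36 * P ^ 4 := by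
    have h : 2 * DD (DD C) = T * (2 * K2 + K1 * K1) := by
      rw [← x2, ← x0]; linear_combination PowerSeries.X * y2
    have h' : 2 * DD (DD C) = (P - 1) * (2 * (K2 - DD (DD C)) + K1 * K1) := by
      linear_combination P * h - 2 * DD (DD C) * hP + (2 * (K2 - DD (DD C)) + K1 * K1) * hTP
    have h3 : 720 * (K2 - DD (DD C)) = 5 * (12 * DD (DD (DD (DD B)))) + 2 * DD (DD (DD (DD T))) := by
      linear_combination 2 * k2
    rw [b4, t4] at h3
    linear_combination 720 * h' + (P - 1) * 2 * h3 + 5 * (P - 1) * kk2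
  have g1 : 1440 * DD C = 35 * P ^ 7 - 115 * P ^ 6 + 137 * P ^ 5 - 69 * P ^ 4 + 12 * P ^ 3 := by
    apply DD_inj
    · rw [DD_ofNat, g2]
      simp only [DD_add, DD_sub, DD_ofNat, DD_pow, pD]; push_cast; ring
    · have e : 35 * P ^ 7 - 115 * P ^ 6 + 137 * P ^ 5 - 69 * P ^ 4 + 12 * P ^ 3 =
          (P - 1) * (35 * P ^ 6 - 80 * P ^ 5 + 57 * P ^ 4 - 12 * P ^ 3) := by ring
      rw [e, ev_zero, ev_zero, DD_coeff_zero, map_sub, hP0]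
      simp
  have g0 : 1440 * C = 7 * P ^ 5 - 20 * P ^ 4 + 19 * P ^ 3 - 6 * P ^ 2 := by
    apply DD_inj
    · rw [DD_ofNat, g1]
      simp only [DD_add, DD_sub, DD_ofNat, DD_pow, pD]; push_cast; ring
    · have e : 7 * P ^ 5 - 20 * P ^ 4 + 19 * P ^ 3 - 6 * P ^ 2 =
          (P - 1) * (7 * P ^ 4 - 13 * P ^ 3 + 6 * P ^ 2) := by ring
      rw [e, ev_zero, ev_zero, hC0, map_sub, hP0]
      simp
  have a1 : 2 * DD A = 2 * T - T ^ 2 := by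
    apply DD_inj
    · rw [DD_ofNat, DD_sub, DD_ofNat, DD_pow]
      push_cast
      linear_combination 2 * hT - 2 * tD
    · have zT' : PowerSeries.constantCoeff T = 0 := by simpa using zT
      rw [ev_zero, DD_coeff_zero]
      simp [zT']
  have a2 : P ^ 2 * (2 * DD A) = P ^ 2 - 1 := by
    rw [a1]; linear_combination (2 * P - T * P - (P - 1)) * hTP
  have m1 : 2880 * (DD A * DD (DD C)) = (P ^ 2 - 1) * (245 * P ^ 7 - 935 * P ^ 6 + 1375 * P ^ 5 - 961 * P ^ 4 + 312 * P ^ 3 - 36 * P ^ 2) := by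
    rw [← a2]; linear_combination 2 * DD A * g2
  have m2 : 1440 * (T * DD C) = (P - 1) * (35 * P ^ 6 - 115 * P ^ 5 + 137 * P ^ 4 - 69 * P ^ 3 + 12 * P ^ 2) := by
    rw [← hTP]; linear_combination T * g1
  have m3 : 144 * (DD (DD B) * DD (DD B)) = (P ^ 2 * (P - 1) ^ 2) ^ 2 := by rw [← b2]; ring
  have m4 : 288 * (DD B * DD (DD (DD B))) = (P - 1) ^ 2 * (4 * P ^ 6 - 10 * P ^ 5 + 8 * P ^ 4 - 2 * P ^ 3) := by
    rw [← b1, ← b3]; ring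
  have n1 : DD (DD A * DD C) = T * DD C + DD A * DD (DD C) := by rw [DD_mul]
  have n2 : DD (DD (DD B * DD B)) = 2 * (DD (DD B) * DD (DD B)) + 2 * (DD B * DD (DD (DD B))) := by
    rw [DD_mul, DD_add, DD_mul, DD_mul]; ring
  rw [n1, n2]
  have h2880 : (2880 : PowerSeries ℚ) ≠ 0 := by
    intro h
    have hc : (2880 : PowerSeries ℚ) * PowerSeries.C (1/2880) = 1 := by
      rw [← map_ofNat (PowerSeries.C (R := ℚ)) 2880, ← map_mul]; norm_num
    rw [h, zero_mul] at hc
    exact zero_ne_one hc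
  apply mul_left_cancel₀ h2880
  linear_combination 2 * 544 * g2 + 2 * 816 * g1 + 2 * 272 * g0 - 240 * 97 * b3 + 240 * 160 * b2 -
    1088 * m1 - 2 * (1088 - 920) * m2 - (46788 - 2 * 7798) * 20 * m3 + 2 * 7798 * 10 * m4

theorem coeff_ofNat_mul (n : ℕ) [n.AtLeastTwo] (d : ℕ) (f : PowerSeries ℚ) :
    PowerSeries.coeff d ((no_index (OfNat.ofNat n : PowerSeries ℚ)) * f) = (OfNat.ofNat n : ℚ) * PowerSeries.coeff d f := by
  rw [← map_ofNat (PowerSeries.C (R := ℚ)) n, PowerSeries.coeff_C_mul]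

theorem sum_Icc (d : ℕ) (hd : 1 ≤ d) (F : ℕ → ℕ → ℚ) (h0 : F 0 d = 0) (h1 : F d 0 = 0) :
    ∑ p ∈ HasAntidiagonal.antidiagonal d, F p.1 p.2 = ∑ i ∈ Finset.Icc 1 (d - 1), F i (d - i) := by
  rw [Finset.Nat.sum_antidiagonal_eq_sum_range_succ F]
  symm
  apply sum_subset
  · intro i hi
    simp only [mem_Icc, mem_range] at *
    omega
  · intro i hi hi'
    simp only [mem_Icc, mem_range] at *
    have : i = 0 ∨ i = d := by omega
    rcases this with rfl | rfl
    · exact h0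
    · rw [Nat.sub_self]; exact h1

theorem final_recursion (d : ℕ) (hd : 1 ≤ d) :
    hurwitzNumber 2 d =
      (d : ℚ) ^ 2 * ((97 / 136) * (d : ℚ) - 20 / 17) * hurwitzNumber 1 d +
        (∑ i ∈ Finset.Icc 1 (d - 1),
          (Nat.choose (2 * d) (2 * i - 2) : ℚ) * (8 * (d : ℚ) - (115 / 17) * (i : ℚ)) *
            (i : ℚ) * ((d - i : ℕ) : ℚ) * hurwitzNumber 0 i * hurwitzNumber 2 (d - i)) +
        ∑ i ∈ Finset.Icc 1 (d - 1),
          (Nat.choose (2 * d) (2 * i) : ℚ) *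
            ((11697 / 34) * (i : ℚ) * ((d - i : ℕ) : ℚ) - (3899 / 68) * (d : ℚ) ^ 2) *
            (i : ℚ) * ((d - i : ℕ) : ℚ) * hurwitzNumber 1 i * hurwitzNumber 1 (d - i) := by
  obtain ⟨A, B, C, E0, E1, E2, hA, hB, hC, a0, b0, c0, u0, u1, u2, x0, x1, x2, d0, d1, d2⟩ := system
  have key := congrArg (PowerSeries.coeff d) (main_identity A B C E0 E1 E2 a0 b0 c0 u0 u1 u2 x0 x1 x2 d0 d1 d2)
  simp only [map_sub, map_add, coeff_ofNat_mul, coeff_DD] at key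
  have s1 : PowerSeries.coeff d (DD A * DD C) = ∑ i ∈ Finset.Icc 1 (d - 1),
      (i * PowerSeries.coeff i A) * ((d - i : ℕ) * PowerSeries.coeff (d - i) C) := by
    rw [PowerSeries.coeff_mul]
    simp only [coeff_DD]
    exact sum_Icc d hd (fun i j => (i * PowerSeries.coeff i A) * (j * PowerSeries.coeff j C)) (by simp) (by simp)
  have s2 : PowerSeries.coeff d (DD (DD A) * DD C) = ∑ i ∈ Finset.Icc 1 (d - 1),
      (i * (i * PowerSeries.coeff i A)) * ((d - i : ℕ) * PowerSeries.coeff (d - i) C) := by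
    rw [PowerSeries.coeff_mul]
    simp only [coeff_DD]
    exact sum_Icc d hd (fun i j => (i * (i * PowerSeries.coeff i A)) * (j * PowerSeries.coeff j C)) (by simp) (by simp)
  have s3 : PowerSeries.coeff d (DD (DD B) * DD (DD B)) = ∑ i ∈ Finset.Icc 1 (d - 1),
      (i * (i * PowerSeries.coeff i B)) * ((d - i : ℕ) * ((d - i : ℕ) * PowerSeries.coeff (d - i) B)) := by
    rw [PowerSeries.coeff_mul]
    simp only [coeff_DD]
    exact sum_Icc d hd (fun i j => (i * (i * PowerSeries.coeff i B)) * (j * (j * PowerSeries.coeff j B))) (by simp) (by simp)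
  have s4 : PowerSeries.coeff d (DD B * DD B) = ∑ i ∈ Finset.Icc 1 (d - 1),
      (i * PowerSeries.coeff i B) * ((d - i : ℕ) * PowerSeries.coeff (d - i) B) := by
    rw [PowerSeries.coeff_mul]
    simp only [coeff_DD]
    exact sum_Icc d hd (fun i j => (i * PowerSeries.coeff i B) * (j * PowerSeries.coeff j B)) (by simp) (by simp)
  have fne : ∀ n : ℕ, (n.factorial : ℚ) ≠ 0 := fun n => by positivity
  have hA' : ∀ i, 1 ≤ i → hurwitzNumber 0 i = PowerSeries.coeff i A * (2 * i - 2).factorial := by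
    intro i hi; rw [hA i hi, div_mul_cancel₀ _ (fne _)]
  have hB' : ∀ i, 1 ≤ i → hurwitzNumber 1 i = PowerSeries.coeff i B * (2 * i).factorial := by
    intro i hi; rw [hB i hi, div_mul_cancel₀ _ (fne _)]
  have hC' : ∀ i, 1 ≤ i → hurwitzNumber 2 i = PowerSeries.coeff i C * (2 * i + 2).factorial := by
    intro i hi; rw [hC i hi, div_mul_cancel₀ _ (fne _)]
  have S1 : (∑ i ∈ Finset.Icc 1 (d - 1),
          (Nat.choose (2 * d) (2 * i - 2) : ℚ) * (8 * (d : ℚ) - (115 / 17) * (i : ℚ)) *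
            (i : ℚ) * ((d - i : ℕ) : ℚ) * hurwitzNumber 0 i * hurwitzNumber 2 (d - i)) =
      (2 * d).factorial * (8 * d * PowerSeries.coeff d (DD A * DD C) - 115 / 17 * PowerSeries.coeff d (DD (DD A) * DD C)) := by
    rw [s1, s2, Finset.mul_sum, Finset.mul_sum, ← Finset.sum_sub_distrib, Finset.mul_sum]
    refine Finset.sum_congr rfl fun i hi => ?_
    rw [Finset.mem_Icc] at hi
    have hc := Nat.choose_mul_factorial_mul_factorial (show 2 * i - 2 ≤ 2 * d by omega)
    rw [show 2 * d - (2 * i - 2) = 2 * (d - i) + 2 by omega] at hc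
    have hc' : (Nat.choose (2 * d) (2 * i - 2) : ℚ) * (2 * i - 2).factorial * (2 * (d - i) + 2).factorial = (2 * d).factorial := by
      exact_mod_cast hc
    rw [hA' i hi.1, hC' (d - i) (by omega), ← hc']
    ring
  have S2 : (∑ i ∈ Finset.Icc 1 (d - 1),
          (Nat.choose (2 * d) (2 * i) : ℚ) *
            ((11697 / 34) * (i : ℚ) * ((d - i : ℕ) : ℚ) - (3899 / 68) * (d : ℚ) ^ 2) *
            (i : ℚ) * ((d - i : ℕ) : ℚ) * hurwitzNumber 1 i * hurwitzNumber 1 (d - i)) =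
      (2 * d).factorial * (11697 / 34 * PowerSeries.coeff d (DD (DD B) * DD (DD B)) - 3899 / 68 * d ^ 2 * PowerSeries.coeff d (DD B * DD B)) := by
    rw [s3, s4, Finset.mul_sum, Finset.mul_sum, ← Finset.sum_sub_distrib, Finset.mul_sum]
    refine Finset.sum_congr rfl fun i hi => ?_
    rw [Finset.mem_Icc] at hi
    have hc := Nat.choose_mul_factorial_mul_factorial (show 2 * i ≤ 2 * d by omega)
    rw [show 2 * d - 2 * i = 2 * (d - i) by omega] at hc
    have hc' : (Nat.choose (2 * d) (2 * i) : ℚ) * (2 * i).factorial * (2 * (d - i)).factorial = (2 * d).factorial := by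
      exact_mod_cast hc
    rw [hB' i hi.1, hB' (d - i) (by omega), ← hc']
    ring
  rw [S1, S2, hC' d hd, hB' d hd, Nat.factorial_succ, Nat.factorial_succ]
  push_cast
  linear_combination ((2 * d).factorial : ℚ) / 136 * key


end HurwitzToda

/-- The genus `2` recursion for the Hurwitz numbers, conjectured by Graber–Pandharipande
and proven by Goulden–Jackson:
`H_{2,d} = d²((97/136)d - 20/17) H_{1,d}
  + ∑_{i=1}^{d-1} C(2d, 2i-2) (8d - (115/17)i) i (d-i) H_{0,i} H_{2,d-i}
  + ∑_{i=1}^{d-1} C(2d, 2i) ((11697/34) i(d-i) - (3899/68) d²) i (d-i) H_{1,i} H_{1,d-i}`. -/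
theorem genus_two_hurwitz_recursion (d : ℕ) (hd : 1 ≤ d) :
    hurwitzNumber 2 d =
      (d : ℚ) ^ 2 * ((97 / 136) * (d : ℚ) - 20 / 17) * hurwitzNumber 1 d +
        (∑ i ∈ Finset.Icc 1 (d - 1),
          (Nat.choose (2 * d) (2 * i - 2) : ℚ) * (8 * (d : ℚ) - (115 / 17) * (i : ℚ)) *
            (i : ℚ) * ((d - i : ℕ) : ℚ) * hurwitzNumber 0 i * hurwitzNumber 2 (d - i)) +
        ∑ i ∈ Finset.Icc 1 (d - 1),
          (Nat.choose (2 * d) (2 * i) : ℚ) *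
            ((11697 / 34) * (i : ℚ) * ((d - i : ℕ) : ℚ) - (3899 / 68) * (d : ℚ) ^ 2) *
            (i : ℚ) * ((d - i : ℕ) : ℚ) * hurwitzNumber 1 i * hurwitzNumber 1 (d - i) := by
  exact HurwitzToda.final_recursion d hd
end

section
/- Let A be a commutative Noetherian ring and let U be an open subset of Spec A containing every associated prime of A (regarded as points of Spec A). Then there exists a non-zerodivisor x ∈ A such that the basic open set D(x) is contained in U. -/
/-- Let `A` be a commutative Noetherian ring and `U ⊆ Spec A` an open set containing every
associated prime of `A`. Then there is a non-zerodivisor `x ∈ A` with `D(x) ⊆ U`. -/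
theorem exists_nonZeroDivisor_basicOpen_le {A : Type*} [CommRing A] [IsNoetherianRing A]
    (U : TopologicalSpace.Opens (PrimeSpectrum A))
    (hU : ∀ p : PrimeSpectrum A, p.asIdeal ∈ associatedPrimes A A → p ∈ U) :
    ∃ x ∈ nonZeroDivisors A, PrimeSpectrum.basicOpen x ≤ U := by
  obtain ⟨s, hs⟩ := (PrimeSpectrum.isOpen_iff (U : Set (PrimeSpectrum A))).1 U.isOpen
  have key : ∀ p : PrimeSpectrum A, p ∉ U ↔ s ⊆ p.asIdeal := fun p => by
    have := Set.ext_iff.1 hs p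
    simpa [PrimeSpectrum.mem_zeroLocus] using this
  by_contra! hcon
  have hsub : ((Ideal.span s : Ideal A) : Set A) ⊆
      ⋃ p ∈ associatedPrimes A A, ((id p : Ideal A) : Set A) := by
    simp only [id, biUnion_associatedPrimes_eq_compl_nonZeroDivisors]
    intro x hx hx'
    refine hcon x hx' fun p hp => ?_
    by_contra hpU
    exact hp (Ideal.span_le.2 ((key p).1 hpU) hx)
  obtain ⟨P, hP, hle⟩ := ((Ideal.span s).subset_union_prime_finite
    (associatedPrimes.finite A A) (f := id) 0 0 fun _ h _ _ => h.isPrime).1 hsub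
  exact (key ⟨P, hP.isPrime⟩).2 (Ideal.span_le.1 hle) (hU ⟨P, hP.isPrime⟩ hP)
end
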